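/- arXiv:2308.05119 — 3 statements merged into one kernel-verified Lean document; each statement's English description precedes it below -/
import Mathlib

section
/- Every Gr-category is equivalent, as a monoidal category, to a strict Gr-category, i.e., one whose associator and left and right unitors are identity natural transformations. -/
/-!
The strict model is the usual strictification of a monoidal category `C`. Its objects are finite
lists of objects of `C`. A list is evaluated to its right-bracketed tensor product in `C`, and a
morphism between lists is a morphism of `C` between their evaluations. The tensor product of
lists is concatenation, which is strictly associative and unital.

Evaluation turns concatenation into the tensor product up to the coherence isomorphism
`GrStrict.evμ`. The tensor product of morphisms is defined by conjugating with it. That the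
identities may serve as associator and unitors comes down to the compatibility of `evμ` with
the associator and right unitor of `C` (`GrStrict.evμ_assoc`, `GrStrict.evμ_nil`), proved by
induction on the first list. Since evaluation is fully faithful, the monoidal axioms for lists
follow from those of `C`, and evaluation becomes a strong monoidal functor. It is essentially
surjective because `[X]` evaluates to `X ⊗ 𝟙_ C ≅ X`; hence it is a monoidal equivalence, whose
inverse inherits a monoidal structure from the adjunction. Invertibility of morphisms and of
objects passes along this equivalence.
-/

open CategoryTheory MonoidalCategory

universe v u v' u'

/-- A Gr-category: a monoidal category in which every morphism is invertible and
every object is invertible. -/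
def IsGrCategory (C : Type u) [Category.{v} C] [MonoidalCategory C] : Prop :=
  (∀ {X Y : C} (f : X ⟶ Y), IsIso f) ∧
  (∀ X : C, ∃ Y : C, Nonempty (X ⊗ Y ≅ 𝟙_ C) ∧ Nonempty (Y ⊗ X ≅ 𝟙_ C))

/-- An equivalence of monoidal categories: monoidal functors in both directions together with
monoidal natural isomorphisms to the identity functors. -/
structure MonoidalEquiv (C : Type u) (D : Type u') [Category.{v} C] [MonoidalCategory C]
    [Category.{v'} D] [MonoidalCategory D] where
  F : C ⥤ D
  G : D ⥤ C
  [monF : F.Monoidal]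
  [monG : G.Monoidal]
  unitIso : F ⋙ G ≅ 𝟭 C
  counitIso : G ⋙ F ≅ 𝟭 D
  [unit_isMonoidal : NatTrans.IsMonoidal unitIso.hom]
  [counit_isMonoidal : NatTrans.IsMonoidal counitIso.hom]

/-- A strict Gr-category monoidally equivalent to `C`: the associator and both unitors
are identity natural transformations. -/
structure StrictGrModel (C : Type u) [Category.{v} C] [MonoidalCategory C] where
  D : Type u
  [cat : Category.{v} D]
  [mon : MonoidalCategory D]
  gr : IsGrCategory D
  assoc_obj_eq : ∀ X Y Z : D, (X ⊗ Y) ⊗ Z = X ⊗ (Y ⊗ Z)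
  associator_eq_id : ∀ X Y Z : D, (α_ X Y Z).hom = eqToHom (assoc_obj_eq X Y Z)
  unit_tensor_obj_eq : ∀ X : D, 𝟙_ D ⊗ X = X
  leftUnitor_eq_id : ∀ X : D, (λ_ X).hom = eqToHom (unit_tensor_obj_eq X)
  tensor_unit_obj_eq : ∀ X : D, X ⊗ 𝟙_ D = X
  rightUnitor_eq_id : ∀ X : D, (ρ_ X).hom = eqToHom (tensor_unit_obj_eq X)
  equiv : MonoidalEquiv C D

namespace GrStrict

variable {C : Type u} [Category.{v} C] [MonoidalCategory C]

/-- The right-bracketed tensor product of a list of objects, ending in the unit object. -/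
def ev : List C → C
  | [] => 𝟙_ C
  | X :: l => X ⊗ ev l

/-- The coherence isomorphism from the tensor product of two evaluated lists to the evaluation of
their concatenation. -/
def evμ : ∀ l m : List C, ev l ⊗ ev m ≅ ev (l ++ m)
  | [], m => λ_ (ev m)
  | X :: l, m => α_ X (ev l) (ev m) ≪≫ whiskerLeftIso X (evμ l m)

/-- Transport along an equality of tails is the whiskering of the transport between the tails;
this feeds the induction hypotheses of `evμ_nil` and `evμ_assoc`. -/
lemma eqToHom_cons (X : C) {l m : List C} (h : l = m) (h' : ev (X :: l) = ev (X :: m)) :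
    eqToHom h' = X ◁ eqToHom (congrArg ev h) := by
  subst h
  exact (whiskerLeft_id X (ev l)).symm

lemma evμ_nil (l : List C) :
    (evμ l []).hom ≫ eqToHom (congrArg ev (List.append_nil l)) = (ρ_ (ev l)).hom := by
  induction l with
  | nil =>
    change (λ_ (𝟙_ C)).hom ≫ 𝟙 _ = (ρ_ (𝟙_ C)).hom
    rw [Category.comp_id, unitors_equal]
  | cons X l ih =>
    rw [eqToHom_cons X (List.append_nil l)]
    have ih' := congrArg (fun f => X ◁ f) ih
    simp only [whiskerLeft_comp] at ih'
    calc
      _ = (α_ X (ev l) (𝟙_ C)).hom ≫ X ◁ (evμ l []).hom ≫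
          X ◁ eqToHom (congrArg ev (List.append_nil l)) := Category.assoc _ _ _
      _ = (α_ X (ev l) (𝟙_ C)).hom ≫ X ◁ (ρ_ (ev l)).hom := congrArg _ ih'
      _ = (ρ_ (X ⊗ ev l)).hom := (rightUnitor_tensor_hom X (ev l)).symm

lemma evμ_assoc (l m n : List C) :
    (evμ l m).hom ▷ ev n ≫ (evμ (l ++ m) n).hom ≫
        eqToHom (congrArg ev (List.append_assoc l m n)) =
      (α_ (ev l) (ev m) (ev n)).hom ≫ ev l ◁ (evμ m n).hom ≫ (evμ l (m ++ n)).hom := by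
  induction l with
  | nil =>
    change (λ_ (ev m)).hom ▷ ev n ≫ (evμ m n).hom ≫ 𝟙 _ =
      (α_ (𝟙_ C) (ev m) (ev n)).hom ≫ 𝟙_ C ◁ (evμ m n).hom ≫ (λ_ _).hom
    rw [Category.comp_id, leftUnitor_naturality, leftUnitor_whiskerRight, Category.assoc]
  | cons X l ih =>
    rw [eqToHom_cons X (List.append_assoc l m n)]
    change ((α_ X (ev l) (ev m)).hom ≫ X ◁ (evμ l m).hom) ▷ ev n ≫
        ((α_ X (ev (l ++ m)) (ev n)).hom ≫ X ◁ (evμ (l ++ m) n).hom) ≫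
          X ◁ eqToHom (congrArg ev (List.append_assoc l m n)) =
      (α_ (X ⊗ ev l) (ev m) (ev n)).hom ≫ (X ⊗ ev l) ◁ (evμ m n).hom ≫
        ((α_ X (ev l) (ev (m ++ n))).hom ≫ X ◁ (evμ l (m ++ n)).hom)
    have ih' := congrArg (fun f => X ◁ f) ih
    simp only [whiskerLeft_comp] at ih'
    simp only [comp_whiskerRight, Category.assoc, whisker_assoc, tensor_whiskerLeft,
      Iso.inv_hom_id_assoc]
    rw [ih']
    simp

variable (C) in
/-- Lists of objects of `C`, with morphisms those of `C` between the evaluated lists. -/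
abbrev Str : Type u := InducedCategory C (ev : List C → C)

variable (C) in
/-- Evaluation as a functor. -/
abbrev evF : Str C ⥤ C := inducedFunctor ev

lemma eqToHom_hom {X Y : Str C} (h : X = Y) :
    (eqToHom h).hom = eqToHom (congrArg (ev : List C → C) h) := by
  subst h
  rfl

/-- Concatenation as tensor product, with identities as associator and unitors. -/
instance : MonoidalCategoryStruct (Str C) where
  tensorObj l m := List.append l m
  tensorUnit := ([] : List C)
  whiskerLeft l _ _ f := ⟨(evμ l _).inv ≫ ev l ◁ f.hom ≫ (evμ l _).hom⟩
  whiskerRight f m := ⟨(evμ _ m).inv ≫ f.hom ▷ ev m ≫ (evμ _ m).hom⟩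
  tensorHom f g := ⟨(evμ _ _).inv ≫ (f.hom ⊗ₘ g.hom) ≫ (evμ _ _).hom⟩
  associator l m n := eqToIso (List.append_assoc l m n)
  leftUnitor l := eqToIso (List.nil_append l)
  rightUnitor l := eqToIso (List.append_nil l)

variable (C) in
/-- Evaluation preserves all the monoidal operations up to `evμ`. -/
def evData : Monoidal.InducingFunctorData (evF C) where
  μIso l m := evμ l m
  εIso := Iso.refl _
  whiskerLeft_eq _ _ _ _ := rfl
  whiskerRight_eq _ _ := rfl
  tensorHom_eq _ _ := rfl
  associator_eq l m n := by
    refine (eqToHom_hom (List.append_assoc l m n)).trans ?_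
    have h := (Iso.eq_inv_comp _).2 ((Iso.eq_inv_comp (whiskerRightIso (evμ l m) (ev n))).2
      (evμ_assoc (C := C) l m n))
    refine h.trans ?_
    simp only [Iso.trans_hom, Iso.symm_hom, tensorIso_hom, Iso.refl_hom, tensorHom_id,
      id_tensorHom, Category.assoc]
    rfl
  leftUnitor_eq l := by
    refine (eqToHom_hom (List.nil_append l)).trans ?_
    change 𝟙 (ev l) = ((λ_ (ev l)).inv ≫ (𝟙 (𝟙_ C) ⊗ₘ 𝟙 (ev l))) ≫ (λ_ (ev l)).hom
    simp
  rightUnitor_eq l := by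
    refine (eqToHom_hom (List.append_nil l)).trans ?_
    refine ((Iso.eq_inv_comp _).2 (evμ_nil (C := C) l)).trans ?_
    change _ = ((evμ l []).inv ≫ (𝟙 (ev l) ⊗ₘ 𝟙 (ev []))) ≫ (ρ_ (ev l)).hom
    rw [id_tensorHom_id, Category.comp_id]

instance : MonoidalCategory (Str C) := Monoidal.induced (evF C) (evData C)

instance : (evF C).Monoidal := Monoidal.fromInducedMonoidal (evF C) (evData C)

instance : (evF C).EssSurj where
  mem_essImage X := ⟨([X] : List C), ⟨ρ_ X⟩⟩

instance : (evF C).IsEquivalence where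

variable (C) in
/-- Evaluation as an equivalence of categories. -/
noncomputable def evE : Str C ≌ C := (evF C).asEquivalence

instance : (evE C).functor.Monoidal := inferInstanceAs (evF C).Monoidal

noncomputable instance : (evE C).inverse.Monoidal := (evE C).inverseMonoidal

instance : (evE C).IsMonoidal where
  leftAdjoint_ε := rfl
  leftAdjoint_μ _ _ := rfl

variable (C) in
/-- The monoidal equivalence whose forward functor is an inverse of evaluation. -/
noncomputable def monEquiv : MonoidalEquiv C (Str C) :=
  haveI : NatTrans.IsMonoidal (evE C).counitIso.hom :=
    inferInstanceAs (NatTrans.IsMonoidal (evE C).counit)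
  haveI : NatTrans.IsMonoidal (evE C).unitIso.hom :=
    inferInstanceAs (NatTrans.IsMonoidal (evE C).unit)
  haveI : NatTrans.IsMonoidal (evE C).unitIso.symm.hom :=
    inferInstanceAs (NatTrans.IsMonoidal (evE C).unitIso.inv)
  { F := (evE C).inverse
    G := (evE C).functor
    unitIso := (evE C).counitIso
    counitIso := (evE C).unitIso.symm }

lemma isGrCategory (hC : IsGrCategory C) : IsGrCategory (Str C) := by
  refine ⟨fun f => ?_, fun l => ?_⟩
  · have : IsIso ((evF C).map f) := hC.1 _
    exact isIso_of_reflects_iso f (evF C)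
  · obtain ⟨Y, ⟨e₁⟩, ⟨e₂⟩⟩ := hC.2 (ev l)
    refine ⟨([Y] : List C), ⟨InducedCategory.isoMk ?_⟩, ⟨InducedCategory.isoMk ?_⟩⟩
    · exact (evμ l [Y]).symm ≪≫ whiskerLeftIso (ev l) (ρ_ Y) ≪≫ e₁
    · exact (evμ [Y] l).symm ≪≫ whiskerRightIso (ρ_ Y) (ev l) ≪≫ e₂

end GrStrict

/-- Every Gr-category is equivalent, as a monoidal category, to a strict Gr-category. -/
theorem every_gr_category_is_equivalent_to_a_strict_gr_category
    (C : Type u) [Category.{v} C] [MonoidalCategory C] (hC : IsGrCategory C) :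
    Nonempty (StrictGrModel C) := by
  exact ⟨{
    D := GrStrict.Str C
    gr := GrStrict.isGrCategory hC
    assoc_obj_eq := fun l m n => List.append_assoc (α := C) l m n
    associator_eq_id := fun _ _ _ => rfl
    unit_tensor_obj_eq := fun l => List.nil_append (α := C) l
    leftUnitor_eq_id := fun _ => rfl
    tensor_unit_obj_eq := fun l => List.append_nil (α := C) l
    rightUnitor_eq_id := fun _ => rfl
    equiv := GrStrict.monEquiv C }⟩
end

section
/- Two restrained Pic-categories 𝒢 and ℋ are equivalent as Pic-categories if and only if both of the following hold: the abelian group of isomorphism classes of objects of 𝒢 (with multiplication induced by ⊗) is isomorphic to the abelian group of isomorphism classes of objects of ℋ, and the abelian group Aut(I_𝒢) of automorphisms of the unit object of 𝒢 is isomorphic to the abelian group Aut(I_ℋ). -/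
/-!
Let `C` be a restrained Pic-category, `A` its group of isomorphism classes and `B` the group
`Aut (𝟙_ C)`, written additively. Tensoring with `B` makes every nonempty hom-set a torsor under
`B`. Choosing an object in each class and an isomorphism from every object to the chosen one
therefore turns every morphism into an element of `B` (`PicCoord`, `exists_picCoord`), and
associator and braiding become functions `h : A → A → A → B` and `c : A → A → B`. The pentagon, the
hexagon and the symmetry make `(h, c)` a `PicCocycle`, and restrainedness is the condition
`c x x = 0`.

The key fact is `PicCocycle.exists_trivialization`: every such cocycle is a coboundary, that is
`h = ∂m` and `c x y = m x y - m y x` for some `m : A → A → B`. By Zorn's lemma it is enough to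
extend a trivialization from a subgroup `H` to `H + ℤa` without changing it on `H`
(`PicCocycle.extend`). A cocycle that vanishes on `H` can be modified, away from `H × H`, so that
`c = 0` and `h` factors through `A ⧸ H` (`PicCocycle.descent`); making `c` vanish is possible
because it is alternating, which is where restrainedness enters. Restricting to the cyclic subgroup
of `A ⧸ H` generated by `a` and pulling back to `ℤ`, it remains to find a symmetric primitive of a
cocycle on `ℤ` that is periodic modulo some `d`, and to make the primitive periodic too
(`PicCocycle.int_descent`).

Consequently `C` is equivalent, by a braided functor, to the strict model `PicModel A B`, which
depends on the two groups only (`exists_equivalence_picModel`). Two restrained Pic-categories with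
isomorphic invariants are thus equivalent to the same model. Conversely, a symmetric monoidal
equivalence induces isomorphisms on isomorphism classes and on automorphisms of the unit.
-/

open CategoryTheory MonoidalCategory

universe v u v' u'

/-- An equivalence of symmetric monoidal categories: symmetric monoidal functors in both
directions together with monoidal natural isomorphisms to the identity functors. -/
structure SymmetricMonoidalEquiv (C : Type u) (D : Type u')
    [Category.{v} C] [MonoidalCategory C] [SymmetricCategory C]
    [Category.{v'} D] [MonoidalCategory D] [SymmetricCategory D] where
  F : C ⥤ D
  G : D ⥤ C
  [monF : F.Braided]
  [monG : G.Braided]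
  unitIso : F ⋙ G ≅ 𝟭 C
  counitIso : G ⋙ F ≅ 𝟭 D
  [unit_isMonoidal : NatTrans.IsMonoidal unitIso.hom]
  [counit_isMonoidal : NatTrans.IsMonoidal counitIso.hom]

/-- The multiplication induced by the tensor product on the set of isomorphism classes of
objects of a monoidal category. -/
def tensorIsoClass {C : Type u} [Category.{v} C] [MonoidalCategory C] :
    Quotient (CategoryTheory.isIsomorphicSetoid C) →
      Quotient (CategoryTheory.isIsomorphicSetoid C) →
      Quotient (CategoryTheory.isIsomorphicSetoid C) :=
  Quotient.map₂ (· ⊗ ·) fun _ _ h₁ _ _ h₂ => ⟨tensorIso h₁.some h₂.some⟩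

/-! ### Cocycles and coboundaries -/

/-- A symmetric 3-cocycle `(h, c)` on `A` with values in `B`: the associator `h` and the braiding `c`
of a skeletal Pic-category with groups `A` and `B`. The axioms are the pentagon, the hexagon,
the symmetry, and the vanishing of self-braidings (restrainedness). -/
structure PicCocycle (A B : Type*) [AddCommGroup A] [AddCommGroup B] where
  h : A → A → A → B
  c : A → A → B
  pent : ∀ x y z w, h x y z + h x (y + z) w + h y z w = h (x + y) z w + h x y (z + w)
  hex : ∀ x y z, h x y z + c x (y + z) + h y z x = c x y + h y x z + c x z
  symm : ∀ x y, c x y = - c y x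
  alt : ∀ x, c x x = 0

namespace PicCocycle

variable {A B : Type*} [AddCommGroup A] [AddCommGroup B]

/-- The coboundary of a 2-cochain `m`. -/
def cob (m : A → A → B) (x y z : A) : B :=
  m x y + m (x + y) z - m y z - m x (y + z)

/-- The cohomologous cocycle obtained by subtracting from `(h, c)` the coboundary of `m`, whose
braiding component is `m x y - m y x`. -/
def twist (K : PicCocycle A B) (m : A → A → B) : PicCocycle A B where
  h x y z := K.h x y z - cob m x y z
  c x y := K.c x y - (m x y - m y x)
  pent x y z w := by
    have := K.pent x y z w
    simp only [cob, ← add_assoc] at *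
    grind
  hex x y z := by
    have := K.hex x y z
    have e1 : y + z + x = x + y + z := by abel
    have e2 : y + (x + z) = x + y + z := by abel
    have e3 : x + (y + z) = x + y + z := by abel
    have e4 : z + x = x + z := by abel
    have e5 : y + x = x + y := by abel
    simp only [cob, e1,e2,e3,e4, e5] at *
    grind
  symm x y := by have := K.symm x y; grind
  alt x := by simp [K.alt]

/-- The restriction of the cocycle to the subgroup `H` is zero. -/
structure NormalOn (K : PicCocycle A B) (H : AddSubgroup A) : Prop where
  h0 : ∀ x ∈ H, ∀ y ∈ H, ∀ z ∈ H, K.h x y z = 0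
  c0 : ∀ x ∈ H, ∀ y ∈ H, K.c x y = 0

/-! ### Cocycles on the integers -/

/-- Every function on `ℤ` has a discrete primitive. -/
theorem exists_sum (w : ℤ → B) : ∃ F : ℤ → B, F 0 = 0 ∧ ∀ n, F (n + 1) = F n + w n := by
  refine ⟨fun n => ∑ i ∈ Finset.range n.toNat, w i - ∑ i ∈ Finset.range (-n).toNat, w (-1 - i),
    by simp, fun n => ?_⟩
  rcases n with n | n
  · have h1 : ((n : ℤ) + 1).toNat = n + 1 := by omega
    have h2 : (-((n : ℤ) + 1)).toNat = 0 := by omega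
    simp only [Int.ofNat_eq_natCast, h1, h2]
    simp [Finset.sum_range_succ]
  · have h1 : (Int.negSucc n + 1).toNat = 0 := by omega
    have h2 : (-(Int.negSucc n + 1)).toNat = n := by omega
    have h3 : (-(Int.negSucc n)).toNat = n + 1 := by omega
    have h4 : (Int.negSucc n).toNat = 0 := by omega
    have h5 : Int.negSucc n = -1 - (n:ℤ) := by omega
    simp only [h1, h2, h3, h4, Finset.sum_range_succ, ← h5]
    simp

theorem const_of_succ {T : Type*} (f : ℤ → T) (hf : ∀ n, f (n + 1) = f n) (n m : ℤ) :
    f n = f m := by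
  have key : ∀ n, f n = f 0 := fun n => by
    induction n using Int.induction_on with
    | zero => rfl
    | succ i ih => rw [hf, ih]
    | pred i ih => rw [← ih, ← hf (-(i : ℤ) - 1)]; congr 1; ring
  rw [key n, key m]

/-- A cocycle on `ℤ` with trivial braiding, whose associator vanishes as soon as the first argument
is divisible by `d`, has a symmetric primitive that vanishes on `dℤ × ℤ`. The case `d = 0` is
allowed and corresponds to an infinite cyclic quotient. -/
theorem int_descent (K : PicCocycle ℤ B) (hc : ∀ x y, K.c x y = 0) (d : ℤ)
    (hd : ∀ k, d ∣ k → ∀ y z, K.h k y z = 0) :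
    ∃ F : ℤ → ℤ → B, (∀ x y z, K.h x y z = cob F x y z) ∧ (∀ x y, F x y = F y x) ∧
      ∀ k, d ∣ k → ∀ y, F k y = 0 := by
  -- Summing `K.h 1 n m` over `n` gives a cochain `g` whose coboundary agrees with `K.h` when the
  -- first argument is `1`; the pentagon propagates this to all first arguments.
  choose f f0 fs using fun m => exists_sum (fun n => K.h 1 n m)
  set g : ℤ → ℤ → B := fun n m => f m n with hg
  have g0 : ∀ m, g 0 m = 0 := f0
  have gs : ∀ n m, g (n + 1) m = g n m + K.h 1 n m := fun n m => fs m n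
  have h10 : ∀ m, K.h 1 0 m = 0 := fun m => by
    have e := K.hex 0 1 m
    simp only [hc, hd 0 (dvd_zero d)] at e
    have e2 := K.hex 1 m 0
    have e3 := K.hex 1 0 m
    simp only [hc, hd 0 (dvd_zero d)] at e2 e3
    grind
  have g1 : ∀ m, g 1 m = 0 := fun m => by
    have := gs 0 m
    rw [g0, h10] at this
    simpa using this
  set E := K.twist g with hE
  have E1 : ∀ n m, E.h 1 n m = 0 := fun n m => by
    simp only [hE, twist, cob, g1, add_comm 1 n, gs]
    abel
  have Es : ∀ n m k, E.h (n + 1) m k = E.h n m k := fun n m k => by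
    have := E.pent 1 n m k
    simp only [E1, add_comm 1 n] at this
    simpa using this.symm
  have E0 : ∀ n m k, E.h n m k = 0 := fun n m k => by
    rw [const_of_succ (fun n => E.h n m k) (fun n => Es n m k) n 1, E1]
  -- With a trivial associator the braiding is biadditive, so `E.c 1 1 = 0` forces `E.c = 0`.
  have Ecs : ∀ x n, E.c x (n + 1) = E.c x n + E.c x 1 := fun x n => by
    have := E.hex x n 1
    simpa [E0] using this
  have Ec : ∀ x, E.c x 1 = 0 → ∀ n, E.c x n = 0 := fun x hx n => by
    rw [const_of_succ (fun n => E.c x n) (fun n => by simp [Ecs, hx]) n 1, hx]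
  have Ec0 : ∀ x y, E.c x y = 0 := fun x y =>
    Ec x (by rw [E.symm, Ec 1 (E.alt 1) x, neg_zero]) y
  have gsymm : ∀ x y, g x y = g y x := fun x y => by
    have := Ec0 x y
    simp only [hE, twist, hc] at this
    grind
  have gcob : ∀ x y z, K.h x y z = cob g x y z := fun x y z => by
    have := E0 x y z
    simp only [hE, twist] at this
    grind
  -- On `dℤ` the cochain `g` is a 2-cocycle, hence the coboundary of some `t`.
  obtain ⟨t, t0, ts⟩ := exists_sum (fun n => - g (n * d) d)
  have t1 : t 1 = 0 := by
    have := ts 0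
    simpa [t0, g0] using this
  have ht : ∀ n m, g (n * d) (m * d) = t n + t m - t (n + m) := fun n m => by
    let e : ℤ → B := fun m => g (n * d) (m * d) - (t n + t m - t (n + m))
    have e1 : e 1 = 0 := by
      simp only [e, ts, one_mul, t1]; abel
    have es : ∀ m, e (m + 1) = e m := fun m => by
      have h1 := gcob (n * d) (m * d) d
      rw [hd _ (Dvd.intro_left _ rfl)] at h1
      simp only [cob] at h1
      have h2 : n * d + m * d = (n + m) * d := by ring
      have h3 : m * d + d = (m + 1) * d := by ring
      have h4 := ts (n + m)
      have h5 := ts m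
      rw [h2, h3] at h1
      simp only [e, ← add_assoc]
      grind
    have := const_of_succ e es m 1
    rw [e1] at this
    exact sub_eq_zero.mp this
  -- `ν` extends `t` from `dℤ` to `ℤ` so that subtracting its coboundary from `g` kills the values
  -- on `dℤ × {remainders modulo d}`. For `d = 0` one has `n / 0 = 0` and `n % 0 = n`, so `ν = 0`.
  let ν : ℤ → B := fun n => t (n / d) - g (n / d * d) (n % d)
  have hν : ∀ n y, ν (n * d + y % d) = t n - g (n * d) (y % d) := fun n y => by
    rcases eq_or_ne d 0 with rfl | hd0
    · have : t n = 0 := by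
        rw [const_of_succ t (fun m => by rw [ts]; simp [g0]) n 0, t0]
      simp [ν, this, t0, g0]
    · have h1 : (n * d + y % d) / d = n := by
        rw [add_comm, Int.add_mul_ediv_right _ _ hd0, Int.ediv_eq_zero_of_lt_abs
          (Int.emod_nonneg y hd0) (Int.emod_lt_abs y hd0), zero_add]
      have h2 : (n * d + y % d) % d = y % d := by simp
      simp only [ν, h1, h2]
  have νk : ∀ n, ν (n * d) = t n := fun n => by
    have := hν n 0
    rw [Int.zero_emod, gsymm, g0] at this
    simpa using this
  have νr : ∀ y, ν (y % d) = 0 := fun y => by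
    have := hν 0 y
    simpa [t0, g0] using this
  let F : ℤ → ℤ → B := fun x y => g x y - (ν x + ν y - ν (x + y))
  have Fcob : ∀ x y z, K.h x y z = cob F x y z := fun x y z => by
    rw [gcob]
    simp only [cob, F, ← add_assoc]
    abel
  have Fkk : ∀ n m, F (n * d) (m * d) = 0 := fun n m => by
    have : n * d + m * d = (n + m) * d := by ring
    simp only [F, this, νk, ht]
    abel
  have Fkr : ∀ n y, F (n * d) (y % d) = 0 := fun n y => by
    simp only [F, hν, νk, νr]
    abel
  refine ⟨F, Fcob, fun x y => ?_, ?_⟩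
  · simp only [F, gsymm x y, add_comm y x]
    abel
  · rintro k ⟨n, rfl⟩ y
    have h1 := Fcob (n * d) (y / d * d) (y % d)
    rw [hd _ (Dvd.intro_left _ rfl)] at h1
    have h2 : n * d + y / d * d = (n + y / d) * d := by ring
    have h3 : y / d * d + y % d = y := Int.ediv_mul_add_emod y d
    simp only [cob, h2, h3, Fkk, Fkr] at h1
    rw [mul_comm]
    simpa using h1.symm

/-! ### Descent to a quotient -/

/-- Normalization at `0`: the cocycle can be made to vanish when an argument is `0`, without
changing anything on `H`. -/
theorem normalize_zero (K : PicCocycle A B) (H : AddSubgroup A) (hK : K.NormalOn H) :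
    ∃ m : A → A → B, (∀ x ∈ H, ∀ y ∈ H, m x y = 0) ∧ (K.twist m).NormalOn H ∧
      (∀ y z, (K.twist m).h 0 y z = 0) ∧ (∀ y z, (K.twist m).h y 0 z = 0) ∧
      (∀ y z, (K.twist m).h y z 0 = 0) ∧ (∀ y, (K.twist m).c y 0 = 0) := by
  classical
  let m : A → A → B := fun x y =>
    if y = 0 then K.h x 0 0 else if x = 0 then - K.h 0 0 y else 0
  have h000 := hK.h0 0 H.zero_mem 0 H.zero_mem 0 H.zero_mem
  have mH : ∀ x ∈ H, ∀ y ∈ H, m x y = 0 := fun x hx y hy => by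
    simp only [m]
    split_ifs
    · exact hK.h0 _ hx _ H.zero_mem _ H.zero_mem
    · rw [hK.h0 _ H.zero_mem _ H.zero_mem _ hy, neg_zero]
    · rfl
  have mx0 : ∀ x, m x 0 = K.h x 0 0 := fun x => by simp [m]
  have m0x : ∀ x, m 0 x = - K.h 0 0 x := fun x => by
    by_cases hx : x = 0 <;> simp [m, hx, h000]
  have key : ∀ y z, (K.twist m).h y 0 z = 0 := fun y z => by
    have := K.pent y 0 0 z
    simp only [twist, cob, mx0, m0x, add_zero, zero_add] at *
    grind
  have N : (K.twist m).NormalOn H := ⟨fun x hx y hy z hz => by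
    simp only [twist, cob, hK.h0 x hx y hy z hz, mH x hx y hy, mH _ (H.add_mem hx hy) z hz,
      mH y hy z hz, mH x hx _ (H.add_mem hy hz)]
    simp, fun x hx y hy => by
    simp [twist, hK.c0 x hx y hy, mH x hx y hy, mH y hy x hx]⟩
  have h0 : ∀ y z, (K.twist m).h 0 y z = 0 := fun y z => by
    have := (K.twist m).pent 0 0 y z
    simp only [key, zero_add, add_zero] at this
    simpa using this
  have h2 : ∀ y z, (K.twist m).h y z 0 = 0 := fun y z => by
    have := (K.twist m).pent y z 0 0
    simp only [key, zero_add, add_zero] at this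
    simpa using this
  refine ⟨m, mH, N, h0, key, h2, fun y => ?_⟩
  have := (K.twist m).hex y 0 0
  simp only [key, h0, zero_add, add_zero] at this
  simpa using this

/-- A system of representatives `ρ` for the cosets of `H`, with `0` representing `H` itself. -/
theorem exists_rep (H : AddSubgroup A) : ∃ ρ : A → A, (∀ x, x - ρ x ∈ H) ∧
    (∀ k ∈ H, ∀ x, ρ (k + x) = ρ x) ∧ (∀ k ∈ H, ρ k = 0) ∧ ∀ x, ρ (ρ x) = ρ x := by
  classical
  let σ : A ⧸ H → A := fun q => if q = 0 then 0 else q.out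
  have hσ : ∀ q, (σ q : A ⧸ H) = q := fun q => by
    by_cases hq : q = 0 <;> simp [σ, hq]
  refine ⟨fun x => σ x, fun x => ?_, fun k hk x => ?_, fun k hk => ?_, fun x => by simp [hσ]⟩
  · rw [← QuotientAddGroup.eq_zero_iff]
    simp [hσ]
  · simp [(QuotientAddGroup.eq_zero_iff k).2 hk]
  · simp [σ, (QuotientAddGroup.eq_zero_iff k).2 hk]

/-- First step of the descent: `h` can be made to vanish on `H × H × A` and `c` on `H × A`. The
values of `m` on `H × A` are dictated by `h` along the decomposition `z = (z - ρ z) + ρ z`, and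
those on `A × H` by the requirement on `c`. -/
theorem vanish_on_left_pair (K : PicCocycle A B) (H : AddSubgroup A) (hK : K.NormalOn H)
    (h1 : ∀ y z, K.h y 0 z = 0) (h2 : ∀ y z, K.h y z 0 = 0) :
    ∃ m : A → A → B, (∀ x ∈ H, ∀ y ∈ H, m x y = 0) ∧
      (∀ x ∈ H, ∀ y ∈ H, ∀ z, (K.twist m).h x y z = 0) ∧
      (∀ x ∈ H, ∀ z, (K.twist m).c x z = 0) := by
  classical
  obtain ⟨ρ, hρ, ρadd, ρ0, ρρ⟩ := exists_rep H
  let l : A → A → B := fun x z => - K.h x (z - ρ z) (ρ z)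
  let m : A → A → B := fun x z => if x ∈ H then l x z else if z ∈ H then K.c x z + l z x else 0
  have mx : ∀ x ∈ H, ∀ z, m x z = l x z := fun x hx z => by simp [m, hx]
  have lH : ∀ x ∈ H, ∀ z ∈ H, l x z = 0 := fun x hx z hz => by simp [l, ρ0 z hz, h2]
  have mH : ∀ x ∈ H, ∀ z ∈ H, m x z = 0 := fun x hx z hz => by rw [mx x hx, lH x hx z hz]
  have Dr : ∀ x ∈ H, ∀ y ∈ H, ∀ z, (K.twist m).h x y (ρ z) = 0 := fun x hx y hy z => by
    simp only [twist, cob, mx _ hx, mx _ hy, mx _ (H.add_mem hx hy), lH x hx y hy]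
    simp [l, ρadd y hy, ρρ, h1]
  have D0 : ∀ x ∈ H, ∀ y ∈ H, ∀ z ∈ H, (K.twist m).h x y z = 0 := fun x hx y hy z hz => by
    simp only [twist, cob, hK.h0 x hx y hy z hz, mH x hx y hy, mH _ (H.add_mem hx hy) z hz,
      mH y hy z hz, mH x hx _ (H.add_mem hy hz)]
    simp
  refine ⟨m, mH, fun x hx y hy z => ?_, fun x hx z => ?_⟩
  · have := (K.twist m).pent x y (z - ρ z) (ρ z)
    rw [sub_add_cancel, Dr _ hx _ (H.add_mem hy (hρ z)), Dr _ hy _ (hρ z),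
      Dr _ (H.add_mem hx hy) _ (hρ z), D0 _ hx _ hy _ (hρ z)] at this
    simpa using this.symm
  · by_cases hz : z ∈ H
    · simp [twist, hK.c0 x hx z hz, mH x hx z hz, mH z hz x hx]
    · have := K.symm x z
      simp only [twist, m, hx, hz, if_true, if_false]
      grind

/-- Second step of the descent: `h` can be made to vanish on `H × A × A`. -/
theorem vanish_on_left (K : PicCocycle A B) (H : AddSubgroup A)
    (h1 : ∀ x ∈ H, ∀ y ∈ H, ∀ z, K.h x y z = 0) (h2 : ∀ x ∈ H, ∀ z, K.c x z = 0) :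
    ∃ m : A → A → B, (∀ x ∈ H, ∀ y ∈ H, m x y = 0) ∧
      (∀ x ∈ H, ∀ y z, (K.twist m).h x y z = 0) ∧
      (∀ x ∈ H, ∀ z, (K.twist m).c x z = 0) := by
  obtain ⟨ρ, hρ, ρadd, ρ0, ρρ⟩ := exists_rep H
  have h0 : ∀ y z, K.h 0 y z = 0 := fun y z => by
    have := K.pent 0 0 y z
    simp only [h1 0 H.zero_mem 0 H.zero_mem, zero_add, add_zero] at this
    simpa using this
  have h3 : ∀ x ∈ H, ∀ z, ∀ y ∈ H, K.h x z y = 0 := fun x hx z y hy => by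
    have := K.hex y x z
    simpa [h1 y hy x hx, h1 x hx y hy, h2 y hy] using this
  let m : A → A → B := fun z w => K.h (z - ρ z) (ρ z) w
  have mx : ∀ x ∈ H, ∀ w, m x w = 0 := fun x hx w => by
    simp [m, ρ0 x hx, h1 x hx 0 H.zero_mem]
  have mx' : ∀ x ∈ H, ∀ w, m w x = 0 := fun x hx w => h3 _ (hρ w) _ _ hx
  have Dr : ∀ x ∈ H, ∀ y z, (K.twist m).h x (ρ y) z = 0 := fun x hx y z => by
    simp only [twist, cob, mx x hx]
    simp [m, ρadd x hx, ρρ, h0]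
  have D1 : ∀ x ∈ H, ∀ y ∈ H, ∀ z, (K.twist m).h x y z = 0 := fun x hx y hy z => by
    simp [twist, cob, mx x hx, mx y hy, mx _ (H.add_mem hx hy), h1 x hx y hy]
  refine ⟨m, fun x hx y _ => mx x hx y, fun x hx y z => ?_, fun x hx z => ?_⟩
  · have := (K.twist m).pent x (y - ρ y) (ρ y) z
    rw [sub_add_cancel, D1 _ hx _ (hρ y), D1 _ hx _ (hρ y), Dr _ (hρ y),
      Dr _ (H.add_mem hx (hρ y))] at this
    simpa using this
  · simp [twist, h2 x hx, mx x hx, mx' x hx]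

/-- Third step of the descent: `c` can be made to vanish. On representatives of the cosets, the
alternating function `c` is split as `w x y - w y x` by means of a linear order. -/
theorem vanish_braiding (K : PicCocycle A B) (H : AddSubgroup A)
    (h1 : ∀ x ∈ H, ∀ y z, K.h x y z = 0) (h2 : ∀ x ∈ H, ∀ z, K.c x z = 0) :
    ∃ m : A → A → B, (∀ x ∈ H, ∀ y ∈ H, m x y = 0) ∧
      (∀ x ∈ H, ∀ y z, (K.twist m).h x y z = 0) ∧
      (∀ x z, (K.twist m).c x z = 0) := by
  classical
  obtain ⟨ρ, hρ, ρadd, ρ0, ρρ⟩ := exists_rep H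
  let _ : LinearOrder A := linearOrderOfSTO WellOrderingRel
  let w : A → A → B := fun x y => if x < y then K.c x y else 0
  have hw : ∀ x y, w x y - w y x = K.c x y := fun x y => by
    rcases lt_trichotomy x y with h | rfl | h
    · simp [w, h, h.not_gt]
    · simp [K.alt]
    · simp [w, h, h.not_gt, ← K.symm x y]
  have w0 : ∀ y, w 0 y = 0 := fun y => by simp [w, h2 0 H.zero_mem]
  have hadd : ∀ x ∈ H, ∀ y z t, K.h (x + y) z t = K.h y z t := fun x hx y z t => by
    have := K.pent x y z t
    simpa [h1 x hx] using this.symm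
  have hr : ∀ y z t, K.h y z t = K.h (ρ y) z t := fun y z t => by
    rw [← hadd _ (hρ y) (ρ y), sub_add_cancel]
  have hc : ∀ y z, K.c y z = K.c y (ρ z) - K.h (ρ y) (z - ρ z) (ρ z) := fun y z => by
    have := K.hex y (z - ρ z) (ρ z)
    rw [sub_add_cancel, h1 _ (hρ z), h1 _ (hρ z), K.symm y (z - ρ z), h2 _ (hρ z), hr] at this
    grind
  let m : A → A → B := fun y z => - K.h (ρ y) (z - ρ z) (ρ z) + w (ρ y) (ρ z)
  have mx : ∀ x ∈ H, ∀ z, m x z = 0 := fun x hx z => by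
    simp [m, ρ0 x hx, h1 0 H.zero_mem, w0]
  have madd : ∀ x ∈ H, ∀ y z, m (x + y) z = m y z := fun x hx y z => by
    simp [m, ρadd x hx]
  refine ⟨m, fun x hx y _ => mx x hx y, fun x hx y z => ?_, fun y z => ?_⟩
  · simp [twist, cob, mx x hx, madd x hx, h1 x hx]
  · have e1 := hc y z
    have e2 := hc (ρ z) y
    have e3 := K.symm y (ρ z)
    have e4 := hw (ρ y) (ρ z)
    have e5 := K.symm (ρ y) (ρ z)
    rw [ρρ] at e2
    simp only [twist, m]
    grind

theorem twist_twist (K : PicCocycle A B) (m n : A → A → B) :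
    (K.twist m).twist n = K.twist (m + n) := by
  simp only [twist, mk.injEq]
  constructor
  · funext x y z; simp only [cob, Pi.add_apply]; abel
  · funext x y; simp only [Pi.add_apply]; abel

/-- A cocycle that vanishes on `H` is cohomologous, by a cochain vanishing on `H × H`, to one with
trivial braiding and with associator vanishing on `H × A × A`. The associator of such a cocycle
factors through `A ⧸ H`. -/
theorem descent (K : PicCocycle A B) (H : AddSubgroup A) (hK : K.NormalOn H) :
    ∃ m : A → A → B, (∀ x ∈ H, ∀ y ∈ H, m x y = 0) ∧
      (∀ x ∈ H, ∀ y z, (K.twist m).h x y z = 0) ∧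
      (∀ x z, (K.twist m).c x z = 0) := by
  obtain ⟨m0, e0, a0, -, b0, c0, -⟩ := normalize_zero K H hK
  obtain ⟨m1, e1, a1, b1⟩ := vanish_on_left_pair _ H a0 b0 c0
  obtain ⟨m2, e2, a2, b2⟩ := vanish_on_left _ H a1 b1
  obtain ⟨m3, e3, a3, b3⟩ := vanish_braiding _ H a2 b2
  simp only [twist_twist] at a3 b3
  exact ⟨_, fun x hx y hy => by simp [e0 x hx y hy, e1 x hx y hy, e2 x hx y hy, e3 x hx y hy],
    a3, b3⟩

/-! ### Trivialization of cocycles -/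

/-- The pullback of a cocycle along a homomorphism. -/
def comap {A' : Type*} [AddCommGroup A'] (K : PicCocycle A B) (f : A' →+ A) :
    PicCocycle A' B where
  h x y z := K.h (f x) (f y) (f z)
  c x y := K.c (f x) (f y)
  pent x y z w := by simpa using K.pent (f x) (f y) (f z) (f w)
  hex x y z := by simpa using K.hex (f x) (f y) (f z)
  symm x y := K.symm _ _
  alt x := K.alt _

/-- A trivialization on `H` extends to the subgroup generated by `H` and one more element `a`. -/
theorem extend (K : PicCocycle A B) (H : AddSubgroup A) (hK : K.NormalOn H) (a : A) :
    ∃ m : A → A → B, (∀ x ∈ H, ∀ y ∈ H, m x y = 0) ∧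
      (K.twist m).NormalOn (H ⊔ AddSubgroup.zmultiples a) := by
  classical
  obtain ⟨m, mH, h1, hc⟩ := descent K H hK
  set L := K.twist m with hL
  have h2 : ∀ y, ∀ x ∈ H, ∀ z, L.h y x z = 0 := fun y x hx z => by
    have := L.hex y x z
    simpa [hc, h1 x hx] using this
  have h3 : ∀ y z, ∀ x ∈ H, L.h y z x = 0 := fun y z x hx => by
    have := L.hex x y z
    simpa [hc, h1 x hx, h2 y x hx] using this
  -- `L.h` is invariant under translation of each argument by `H`.
  have i1 : ∀ x ∈ H, ∀ y z t, L.h (x + y) z t = L.h y z t := fun x hx y z t => by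
    have := L.pent x y z t
    simpa [h1 x hx] using this.symm
  have i2 : ∀ x ∈ H, ∀ y z t, L.h y (x + z) t = L.h y z t := fun x hx y z t => by
    have := L.pent y x z t
    simpa [h1 x hx, h2 _ x hx, add_comm y x, i1 x hx] using this
  have i3 : ∀ x ∈ H, ∀ y z t, L.h y z (x + t) = L.h y z t := fun x hx y z t => by
    have := L.pent y z t x
    simpa [h3 _ _ x hx, add_comm t x] using this.symm
  obtain ⟨d, hd⟩ := Int.subgroup_cyclic (H.comap (zmultiplesHom A a))
  have hd' : ∀ k : ℤ, d ∣ k ↔ k • a ∈ H := fun k => by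
    rw [← AddSubgroup.zmultiples_eq_closure] at hd
    rw [← Int.mem_zmultiples_iff, ← hd]
    simp
  obtain ⟨F, Fcob, Fsymm, Fk⟩ := int_descent (L.comap (zmultiplesHom A a))
    (fun x y => hc _ _) d (fun k hk y z => h1 _ (by simpa using (hd' k).1 hk) _ _)
  have Fadd : ∀ k, d ∣ k → ∀ y z, F (k + y) z = F y z := fun k hk y z => by
    have := Fcob k y z
    simp only [comap, zmultiplesHom_apply, h1 _ ((hd' k).1 hk), cob, Fk k hk] at this
    grind
  have Fcongr : ∀ i j, (i - j) • a ∈ H → ∀ z, F i z = F j z := fun i j hij z => by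
    rw [← Fadd (i - j) ((hd' _).2 hij) j, sub_add_cancel]
  -- On `H + ℤa` the cochain is `F` evaluated at the coefficients of `a`, which are well defined
  -- modulo `d`.
  have hn : ∀ x, ∃ n : ℤ, x ∈ H ⊔ AddSubgroup.zmultiples a → x - n • a ∈ H := fun x => by
    by_cases hx : x ∈ H ⊔ AddSubgroup.zmultiples a
    · obtain ⟨y, hy, z, hz, rfl⟩ := AddSubgroup.mem_sup.1 hx
      obtain ⟨n, rfl⟩ := AddSubgroup.mem_zmultiples_iff.1 hz
      exact ⟨n, fun _ => by simpa using hy⟩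
    · exact ⟨0, fun h => absurd h hx⟩
  choose n hn using hn
  let f : A → A → B := fun x y => F (n x) (n y)
  have hle : H ≤ H ⊔ AddSubgroup.zmultiples a := le_sup_left
  have nH : ∀ x ∈ H, d ∣ n x := fun x hx => (hd' _).2 <| by
    have := H.sub_mem hx (hn x (hle hx))
    simpa using this
  refine ⟨m + f, fun x hx y hy => ?_, ?_⟩
  · simp [mH x hx y hy, f, Fk _ (nH x hx)]
  · rw [← twist_twist, ← hL]
    have nadd : ∀ x ∈ H ⊔ AddSubgroup.zmultiples a, ∀ y ∈ H ⊔ AddSubgroup.zmultiples a,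
        ∀ z, F (n (x + y)) z = F (n x + n y) z := fun x hx y hy z => by
      refine Fcongr _ _ ?_ z
      have := H.sub_mem (H.add_mem (hn x hx) (hn y hy)) (hn _ (add_mem hx hy))
      convert this using 1
      simp only [sub_smul, add_smul]
      abel
    refine ⟨fun x hx y hy z hz => ?_, fun x hx y hy => ?_⟩
    · have e := Fcob (n x) (n y) (n z)
      have e1 : L.h x y z = L.h (n x • a) (n y • a) (n z • a) := by
        have j1 := i1 _ (hn x hx) (n x • a) y z
        have j2 := i2 _ (hn y hy) (n x • a) (n y • a) z
        have j3 := i3 _ (hn z hz) (n x • a) (n y • a) (n z • a)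
        rw [sub_add_cancel] at j1 j2 j3
        rw [j1, j2, j3]
      simp only [comap, zmultiplesHom_apply] at e
      simp only [twist, e1, e, cob, f, nadd x hx y hy, Fsymm _ (n (y + z)), nadd y hy z hz,
        Fsymm _ (n y + n z)]
      abel
    · simp [twist, hc, f, Fsymm (n x)]

/-- Every cocycle with vanishing self-braidings is a coboundary. Zorn's lemma is applied to pairs
of a subgroup and a trivialization on it. -/
theorem exists_trivialization (K : PicCocycle A B) :
    ∃ m : A → A → B, (∀ x y z, K.h x y z = cob m x y z) ∧ ∀ x y, K.c x y = m x y - m y x := by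
  classical
  let S := {p : AddSubgroup A × (A → A → B) // (K.twist p.2).NormalOn p.1}
  let r : S → S → Prop := fun p q =>
    p.1.1 ≤ q.1.1 ∧ ∀ x ∈ p.1.1, ∀ y ∈ p.1.1, p.1.2 x y = q.1.2 x y
  have rtrans : ∀ {p q s : S}, r p q → r q s → r p s := fun h1 h2 =>
    ⟨h1.1.trans h2.1, fun x hx y hy => (h1.2 x hx y hy).trans (h2.2 x (h1.1 hx) y (h1.1 hy))⟩
  have rrefl : ∀ p : S, r p p := fun p => ⟨le_rfl, fun _ _ _ _ => rfl⟩
  have hbase : (K.twist fun _ _ => 0).NormalOn ⊥ := by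
    have := K.pent 0 0 0 0
    simp only [add_zero] at this
    refine ⟨?_, ?_⟩ <;> simp only [AddSubgroup.mem_bot, forall_eq, twist, cob, K.alt] <;> grind
  obtain ⟨p, hp⟩ := exists_maximal_of_chains_bounded (r := r) (fun c hc => by
    rcases c.eq_empty_or_nonempty with rfl | hne
    · exact ⟨⟨(⊥, _), hbase⟩, by simp⟩
    have hdir : ∀ p ∈ c, ∀ q ∈ c, ∃ s ∈ c, r p s ∧ r q s := fun p hp q hq => by
      rcases eq_or_ne p q with rfl | hpq
      · exact ⟨p, hp, rrefl p, rrefl p⟩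
      · rcases hc hp hq hpq with h | h
        · exact ⟨q, hq, h, rrefl q⟩
        · exact ⟨p, hp, rrefl p, h⟩
    -- An upper bound of a nonempty chain: the union of the subgroups with the glued cochain.
    let H : AddSubgroup A := sSup ((fun p : S => p.1.1) '' c)
    have hH : ∀ x ∈ H, ∃ p ∈ c, x ∈ p.1.1 := fun x hx => by
      have hd : DirectedOn (· ≤ ·) ((fun p : S => p.1.1) '' c) := by
        rintro _ ⟨p, hp, rfl⟩ _ ⟨q, hq, rfl⟩
        obtain ⟨s, hs, h1, h2⟩ := hdir p hp q hq
        exact ⟨_, ⟨s, hs, rfl⟩, h1.1, h2.1⟩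
      obtain ⟨_, ⟨p, hp, rfl⟩, hx⟩ := (AddSubgroup.mem_sSup_of_directedOn (hne.image _) hd).1 hx
      exact ⟨p, hp, hx⟩
    have hH2 : ∀ x ∈ H, ∀ y ∈ H, ∃ p ∈ c, x ∈ p.1.1 ∧ y ∈ p.1.1 := fun x hx y hy => by
      obtain ⟨p, hp, hxp⟩ := hH x hx
      obtain ⟨q, hq, hyq⟩ := hH y hy
      obtain ⟨s, hs, h1, h2⟩ := hdir p hp q hq
      exact ⟨s, hs, h1.1 hxp, h2.1 hyq⟩
    let m : A → A → B := fun x y =>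
      if h : ∃ p ∈ c, x ∈ p.1.1 ∧ y ∈ p.1.1 then h.choose.1.2 x y else 0
    have hm : ∀ p ∈ c, ∀ x ∈ p.1.1, ∀ y ∈ p.1.1, p.1.2 x y = m x y := fun p hp x hx y hy => by
      have h : ∃ p ∈ c, x ∈ p.1.1 ∧ y ∈ p.1.1 := ⟨p, hp, hx, hy⟩
      simp only [m, dif_pos h]
      obtain ⟨hq, hxq, hyq⟩ := h.choose_spec
      obtain ⟨s, hs, h1, h2⟩ := hdir p hp _ hq
      rw [h1.2 x hx y hy, h2.2 x hxq y hyq]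
    refine ⟨⟨(H, m), ⟨fun x hx y hy z hz => ?_, fun x hx y hy => ?_⟩⟩, fun p hp =>
      ⟨le_sSup ⟨p, hp, rfl⟩, hm p hp⟩⟩
    · obtain ⟨p, hp, hxp, hyp⟩ := hH2 x hx y hy
      obtain ⟨q, hq, hzq⟩ := hH z hz
      obtain ⟨s, hs, h1, h2⟩ := hdir p hp q hq
      have hxs := h1.1 hxp
      have hys := h1.1 hyp
      have hzs := h2.1 hzq
      have := s.2.h0 x hxs y hys z hzs
      simpa only [twist, cob, hm s hs x hxs y hys, hm s hs _ (add_mem hxs hys) z hzs,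
        hm s hs y hys z hzs, hm s hs x hxs _ (add_mem hys hzs)] using this
    · obtain ⟨p, hp, hxp, hyp⟩ := hH2 x hx y hy
      have := p.2.c0 x hxp y hyp
      simpa only [twist, hm p hp x hxp y hyp, hm p hp y hyp x hxp] using this) rtrans
  -- By `extend`, a maximal pair lives on the whole group.
  have htop : ∀ a, a ∈ p.1.1 := fun a => by
    obtain ⟨m, hm, hN⟩ := extend _ _ p.2 a
    rw [twist_twist] at hN
    refine (hp ⟨(_, _), hN⟩ ⟨le_sup_left, fun x hx y hy => ?_⟩).1
      (AddSubgroup.mem_sup_right (AddSubgroup.mem_zmultiples a))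
    simp [hm x hx y hy]
  refine ⟨p.1.2, fun x y z => ?_, fun x y => ?_⟩
  · exact sub_eq_zero.1 (p.2.h0 x (htop x) y (htop y) z (htop z))
  · exact sub_eq_zero.1 (p.2.c0 x (htop x) y (htop y))

end PicCocycle

/-! ### The standard model -/

/-- The strict restrained Pic-category with group of classes `A` and unit automorphisms `B`: objects
are elements of `A`, and all structure isomorphisms are trivial. -/
structure PicModel (A : Type u) (B : Type v) where
  cls : A

namespace PicModel
variable {A : Type u} {B : Type v} [AddCommGroup A] [AddCommGroup B]

/-- A morphism `a ⟶ b` is an element of `B`, and exists only if `a = b`. -/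
@[ext]
structure Hom (a b : PicModel A B) : Type v where
  val : B
  eq : a.cls = b.cls

instance : Category (PicModel A B) where
  Hom := Hom
  id a := ⟨0, rfl⟩
  comp f g := ⟨f.val + g.val, f.eq.trans g.eq⟩
  id_comp f := Hom.ext (zero_add _)
  comp_id f := Hom.ext (add_zero _)
  assoc f g h := Hom.ext (add_assoc _ _ _)

@[ext] theorem hom_ext {a b : PicModel A B} (f g : a ⟶ b) (h : f.val = g.val) : f = g := Hom.ext h

@[simp] theorem id_val (a : PicModel A B) : (𝟙 a : a ⟶ a).val = 0 := rfl
@[simp] theorem comp_val {a b c : PicModel A B} (f : a ⟶ b) (g : b ⟶ c) :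
    (f ≫ g).val = f.val + g.val := rfl

/-- The isomorphism given by `t : B` between objects with equal classes. -/
def mkIso {a b : PicModel A B} (t : B) (h : a.cls = b.cls) : a ≅ b where
  hom := ⟨t, h⟩
  inv := ⟨-t, h.symm⟩
  hom_inv_id := by ext; simp
  inv_hom_id := by ext; simp

@[simp] theorem mkIso_hom_val {a b : PicModel A B} (t : B) (h : a.cls = b.cls) :
    (mkIso t h).hom.val = t := rfl
@[simp] theorem mkIso_inv_val {a b : PicModel A B} (t : B) (h : a.cls = b.cls) :
    (mkIso t h).inv.val = -t := rfl

instance : MonoidalCategoryStruct (PicModel A B) where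
  tensorObj a b := ⟨a.cls + b.cls⟩
  whiskerLeft a _ _ f := ⟨f.val, congrArg (a.cls + ·) f.eq⟩
  whiskerRight f b := ⟨f.val, congrArg (· + b.cls) f.eq⟩
  tensorHom f g := ⟨f.val + g.val, congrArg₂ (· + ·) f.eq g.eq⟩
  tensorUnit := ⟨0⟩
  associator a b c := mkIso 0 (add_assoc _ _ _)
  leftUnitor a := mkIso 0 (zero_add _)
  rightUnitor a := mkIso 0 (add_zero _)

@[simp] theorem tensor_cls (a b : PicModel A B) : (a ⊗ b).cls = a.cls + b.cls := rfl
@[simp] theorem unit_cls : (𝟙_ (PicModel A B)).cls = 0 := rfl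
@[simp] theorem whiskerLeft_val (a : PicModel A B) {b c : PicModel A B} (f : b ⟶ c) :
    (a ◁ f).val = f.val := rfl
@[simp] theorem whiskerRight_val {b c : PicModel A B} (f : b ⟶ c) (a : PicModel A B) :
    (f ▷ a).val = f.val := rfl
@[simp] theorem tensorHom_val {a b c d : PicModel A B} (f : a ⟶ b) (g : c ⟶ d) :
    (f ⊗ₘ g).val = f.val + g.val := rfl
@[simp] theorem associator_hom_val (a b c : PicModel A B) : (α_ a b c).hom.val = 0 := rfl
@[simp] theorem associator_inv_val (a b c : PicModel A B) : (α_ a b c).inv.val = 0 := neg_zero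
@[simp] theorem leftUnitor_hom_val (a : PicModel A B) : (λ_ a).hom.val = 0 := rfl
@[simp] theorem rightUnitor_hom_val (a : PicModel A B) : (ρ_ a).hom.val = 0 := rfl

instance : MonoidalCategory (PicModel A B) where
  tensorHom_def f g := by ext; simp
  id_tensorHom_id a b := by ext; simp
  tensorHom_comp_tensorHom f g h k := by ext; simp only [comp_val, tensorHom_val]; abel
  whiskerLeft_id a b := by ext; simp
  id_whiskerRight a b := by ext; simp
  associator_naturality f g h := by ext; simp [add_assoc]
  leftUnitor_naturality f := by ext; simp
  rightUnitor_naturality f := by ext; simp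
  pentagon a b c d := by ext; simp
  triangle a b := by ext; simp

instance : SymmetricCategory (PicModel A B) where
  braiding a b := mkIso 0 (add_comm _ _)
  braiding_naturality_right a b c f := by ext; simp
  braiding_naturality_left f c := by ext; simp
  hexagon_forward a b c := by ext; simp
  hexagon_reverse a b c := by ext; simp
  symmetry a b := by ext; simp

@[simp] theorem braiding_hom_val (a b : PicModel A B) : (β_ a b).hom.val = 0 := rfl

end PicModel

/-! ### Inverses of braided equivalences -/

section Inverse
variable {C : Type u} [Category.{v} C] [MonoidalCategory C] [SymmetricCategory C]
  {D : Type u'} [Category.{v'} D] [MonoidalCategory D] [SymmetricCategory D]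

/-- The inverse of a braided monoidal equivalence respects the braiding. -/
theorem inverse_μ_braiding (e : C ≌ D) [e.functor.Braided] [e.inverse.Monoidal]
    [e.IsMonoidal] (X Y : D) :
    Functor.LaxMonoidal.μ e.inverse X Y ≫ e.inverse.map (β_ X Y).hom =
      (β_ (e.inverse.obj X) (e.inverse.obj Y)).hom ≫ Functor.LaxMonoidal.μ e.inverse Y X := by
  apply e.functor.map_injective
  rw [← cancel_mono (e.counitIso.hom.app _)]
  simp [Equivalence.functor_map_μ_inverse_comp_counitIso_hom_app_tensor,
    Equivalence.functor_map_μ_inverse_comp_counit_app_tensor_assoc]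

theorem Equivalence.nonempty_symmetricMonoidalEquiv (e : C ≌ D) [e.functor.Braided] :
    Nonempty (SymmetricMonoidalEquiv C D) := by
  let i1 : e.inverse.Monoidal := e.inverseMonoidal
  have i2 : e.IsMonoidal := ⟨rfl, fun _ _ => rfl⟩
  let i3 : e.inverse.Braided := { i1 with braided := inverse_μ_braiding e }
  have i4 : NatTrans.IsMonoidal e.unitIso.hom :=
    inferInstanceAs (NatTrans.IsMonoidal e.toAdjunction.unit)
  have i5 : NatTrans.IsMonoidal e.counitIso.hom :=
    inferInstanceAs (NatTrans.IsMonoidal e.toAdjunction.counit)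
  exact ⟨{ F := e.functor, G := e.inverse, unitIso := e.unitIso.symm, counitIso := e.counitIso
           unit_isMonoidal := inferInstanceAs (NatTrans.IsMonoidal e.unitIso.inv)
           counit_isMonoidal := i5 }⟩

theorem nonempty_symmetricMonoidalEquiv (F : C ⥤ D) [h : F.Braided] [F.IsEquivalence] :
    Nonempty (SymmetricMonoidalEquiv C D) :=
  @Equivalence.nonempty_symmetricMonoidalEquiv _ _ _ _ _ _ _ _ F.asEquivalence h

theorem nonempty_symmetricMonoidalEquiv_of_cospan {E : Type*} [Category E] [MonoidalCategory E]
    [SymmetricCategory E] (F : C ⥤ E) [F.Braided] [F.IsEquivalence]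
    (G : D ⥤ E) [G.Braided] [G.IsEquivalence] : Nonempty (SymmetricMonoidalEquiv C D) := by
  obtain ⟨s⟩ := nonempty_symmetricMonoidalEquiv G
  let i := s.monG
  have : s.G.IsEquivalence :=
    (CategoryTheory.Equivalence.mk s.F s.G s.unitIso.symm s.counitIso).isEquivalence_inverse
  exact nonempty_symmetricMonoidalEquiv (F ⋙ s.G)
end Inverse

/-! ### The action of endomorphisms of the unit -/

section Action
variable {C : Type u} [Category.{v} C] [MonoidalCategory C]

/-- The action of an endomorphism of the unit on a morphism `x ⟶ y`. -/
def unitAct (b : 𝟙_ C ⟶ 𝟙_ C) {x y : C} (f : x ⟶ y) : x ⟶ y :=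
  (λ_ x).inv ≫ (b ⊗ₘ f) ≫ (λ_ y).hom

theorem unitAct_id {x y : C} (f : x ⟶ y) : unitAct (𝟙 _) f = f := by
  simp [unitAct]

theorem unitAct_comp (b b' : 𝟙_ C ⟶ 𝟙_ C) {x y z : C} (f : x ⟶ y) (g : y ⟶ z) :
    unitAct b f ≫ unitAct b' g = unitAct (b ≫ b') (f ≫ g) := by
  simp [unitAct]

theorem unitAct_unitAct (b b' : 𝟙_ C ⟶ 𝟙_ C) {x y : C} (f : x ⟶ y) :
    unitAct b (unitAct b' f) = unitAct (b ≫ b') f := by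
  have h := unitAct_comp b (𝟙 _) (𝟙 x) (unitAct b' f)
  rw [unitAct_id, unitAct_comp, Category.id_comp, Category.comp_id, Category.id_comp] at h
  exact h.symm

theorem unitAct_tensor_left (b : 𝟙_ C ⟶ 𝟙_ C) {x y x' y' : C} (f : x ⟶ y) (g : x' ⟶ y') :
    unitAct b f ⊗ₘ g = unitAct b (f ⊗ₘ g) := by
  simp only [unitAct]
  rw [leftUnitor_tensor_inv, leftUnitor_tensor_hom]
  have := associator_naturality b f g
  simp only [Category.assoc, ← reassoc_of% this, Iso.hom_inv_id_assoc,
    ← tensorHom_id, tensorHom_comp_tensorHom, Category.id_comp,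
    Category.comp_id]

theorem unitAct_tensor [SymmetricCategory C] (b b' : 𝟙_ C ⟶ 𝟙_ C) {x y x' y' : C} (f : x ⟶ y)
    (g : x' ⟶ y') : unitAct b f ⊗ₘ unitAct b' g = unitAct (b ≫ b') (f ⊗ₘ g) := by
  have key : ∀ {x y x' y' : C} (f : x ⟶ y) (g : x' ⟶ y'),
      f ⊗ₘ unitAct b' g = unitAct b' (f ⊗ₘ g) := by
    intro x y x' y' f g
    rw [← cancel_mono (β_ y y').hom, BraidedCategory.braiding_naturality, unitAct_tensor_left]
    conv_lhs => rw [← unitAct_id (β_ x x').hom]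
    conv_rhs => rw [← unitAct_id (β_ y y').hom]
    rw [unitAct_comp, unitAct_comp, BraidedCategory.braiding_naturality]
    simp
  rw [unitAct_tensor_left, key]
  rw [unitAct_unitAct]

/-- In a Gr-category every nonempty hom-set is a torsor under the endomorphisms of the unit. -/
theorem unitAct_bijective (hC : IsGrCategory C) {x y : C} (g : x ⟶ y) :
    Function.Bijective (fun b : 𝟙_ C ⟶ 𝟙_ C => unitAct b g) := by
  obtain ⟨x', ⟨e₁⟩, ⟨e₂⟩⟩ := hC.2 x
  have := hC.1 g
  let E : C ≌ C := CategoryTheory.Equivalence.mk (tensorRight x) (tensorRight x')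
    (NatIso.ofComponents (fun z => (ρ_ z).symm ≪≫ whiskerLeftIso z e₁.symm ≪≫ (α_ z x x').symm)
      (fun f => by
        dsimp
        simp only [Category.assoc, whiskerLeftIso_hom, Iso.symm_hom]
        rw [← associator_inv_naturality_left, whisker_exchange_assoc,
          rightUnitor_inv_naturality_assoc]))
    (NatIso.ofComponents (fun z => (α_ z x' x) ≪≫ whiskerLeftIso z e₂ ≪≫ ρ_ z)
      (fun f => by
        dsimp
        simp only [Category.assoc, whiskerLeftIso_hom]
        rw [associator_naturality_left_assoc, ← whisker_exchange_assoc, rightUnitor_naturality]))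
  have hE : Function.Bijective (fun b : 𝟙_ C ⟶ 𝟙_ C => b ▷ x) :=
    ⟨E.functor.map_injective, E.functor.map_surjective⟩
  constructor
  · intro b b' h
    apply hE.1
    have h : unitAct b g = unitAct b' g := h
    simp only [unitAct, MonoidalCategory.tensorHom_def, cancel_epi, cancel_mono] at h
    exact h
  · intro f
    obtain ⟨b, hb⟩ := hE.2 ((λ_ x).hom ≫ f ≫ inv g ≫ (λ_ x).inv)
    refine ⟨b, ?_⟩
    have hb : b ▷ x = _ := hb
    simp [unitAct, MonoidalCategory.tensorHom_def, hb]
end Action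

/-! ### Coordinates on a Pic-category -/

/-- Coordinates on a monoidal category with groups `A` and `B`: the class `cl` of an object, the
coordinate `χ` of a morphism relative to a coherent family of reference morphisms, and a function
`θ` measuring the failure of the tensor product to preserve reference morphisms. -/
structure PicCoord (C : Type u) [Category.{v} C] [MonoidalCategory C]
    (A B : Type*) [AddCommGroup A] [AddCommGroup B] where
  cl : C → A
  cl_surj : Function.Surjective cl
  cl_tensor : ∀ x y, cl (x ⊗ y) = cl x + cl y
  cl_hom : ∀ {x y : C}, (x ⟶ y) → cl x = cl y
  χ : ∀ {x y : C}, (x ⟶ y) → B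
  χ_bij : ∀ {x y : C}, cl x = cl y → Function.Bijective (χ : (x ⟶ y) → B)
  χ_comp : ∀ {x y z : C} (f : x ⟶ y) (g : y ⟶ z), χ (f ≫ g) = χ f + χ g
  θ : C → C → B
  χ_tensor : ∀ {x y z w : C} (f : x ⟶ y) (g : z ⟶ w),
    χ (f ⊗ₘ g) = χ f + χ g + θ x z - θ y w

/-- A Pic-category has coordinates in any pair of groups isomorphic to its group of isomorphism
classes (via `cl`) and its group of automorphisms of the unit (via `ι`). -/
theorem exists_picCoord {C : Type u} [Category.{v} C] [MonoidalCategory C] [SymmetricCategory C]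
    (hC : IsGrCategory C) {A B : Type*} [AddCommGroup A] [AddCommGroup B] (cl : C → A)
    (cl_surj : Function.Surjective cl)
    (cl_tensor : ∀ x y, cl (x ⊗ y) = cl x + cl y)
    (cl_eq : ∀ x y, cl x = cl y ↔ Nonempty (x ≅ y))
    (ι : Aut (𝟙_ C) ≃ B) (hι : ∀ s t, ι (s * t) = ι s + ι t) : Nonempty (PicCoord C A B) := by
  have hiso : ∀ {x y : C} (f : x ⟶ y), IsIso f := hC.1
  have cl_hom : ∀ {x y : C}, (x ⟶ y) → cl x = cl y :=
    fun f => (cl_eq _ _).2 ⟨@asIso _ _ _ _ f (hiso f)⟩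
  let R : A → C := fun a => (cl_surj a).choose
  have hR : ∀ a, cl (R a) = a := fun a => (cl_surj a).choose_spec
  let i : ∀ x, x ≅ R (cl x) := fun x => ((cl_eq _ _).1 (hR (cl x)).symm).some
  -- The reference morphisms, compatible with composition.
  let J : ∀ x y, cl x = cl y → (x ⟶ y) := fun x y h =>
    (i x).hom ≫ eqToHom (congrArg R h) ≫ (i y).inv
  have J_comp : ∀ {x y z} (h : cl x = cl y) (h' : cl y = cl z),
      J x y h ≫ J y z h' = J x z (h.trans h') := by
    intro x y z h h'
    simp [J]
  -- The action of `B` on morphisms.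
  let s : B → ∀ {x y : C}, (x ⟶ y) → (x ⟶ y) := fun b _ _ f => unitAct (ι.symm b).hom f
  have s_bij : ∀ {x y : C} (g : x ⟶ y), Function.Bijective (fun b => s b g) := by
    intro x y g
    refine (unitAct_bijective hC g).comp (Function.Bijective.comp (g := fun t : Aut (𝟙_ C) => t.hom)
      ⟨fun a b h => Iso.ext h, fun f => ⟨@asIso _ _ _ _ f (hiso f), rfl⟩⟩ ι.symm.bijective)
  -- Multiplication in `Aut` is composition in the opposite order.
  have hadd : ∀ b b', (ι.symm b).hom ≫ (ι.symm b').hom = (ι.symm (b + b')).hom := by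
    intro b b'
    have : ι.symm (b + b') = ι.symm b' * ι.symm b := by
      rw [Equiv.symm_apply_eq, hι]; simp [add_comm]
    rw [this]; rfl
  have s_comp : ∀ b b' {x y z : C} (f : x ⟶ y) (g : y ⟶ z),
      s b f ≫ s b' g = s (b + b') (f ≫ g) := by
    intro b b' x y z f g
    simp only [s, unitAct_comp, hadd]
  have s_tensor : ∀ b b' {x y x' y' : C} (f : x ⟶ y) (g : x' ⟶ y'),
      s b f ⊗ₘ s b' g = s (b + b') (f ⊗ₘ g) := by
    intro b b' x y x' y' f g
    simp only [s, unitAct_tensor, hadd]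
  have s_s : ∀ b b' {x y : C} (f : x ⟶ y), s b (s b' f) = s (b + b') f := by
    intro b b' x y f
    simp only [s, unitAct_unitAct, hadd]
  let χ : ∀ {x y : C}, (x ⟶ y) → B := fun {x y} f => ((s_bij (J x y (cl_hom f))).2 f).choose
  have χ_spec : ∀ {x y : C} (f : x ⟶ y), s (χ f) (J x y (cl_hom f)) = f :=
    fun {x y} f => ((s_bij (J x y (cl_hom f))).2 f).choose_spec
  have χ_eq : ∀ {x y : C} (f : x ⟶ y) (b : B), s b (J x y (cl_hom f)) = f → χ f = b :=
    fun {x y} f b h => (s_bij (J x y (cl_hom f))).1 ((χ_spec f).trans h.symm)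
  have χ_s : ∀ {x y : C} (b : B) (f : x ⟶ y), χ (s b f) = b + χ f := by
    intro x y b f
    apply χ_eq
    rw [← s_s, χ_spec]
  have χ_comp : ∀ {x y z : C} (f : x ⟶ y) (g : y ⟶ z), χ (f ≫ g) = χ f + χ g := by
    intro x y z f g
    apply χ_eq
    rw [← J_comp (cl_hom f) (cl_hom g), ← s_comp, χ_spec, χ_spec]
  let θ : C → C → B := fun x y => χ (J x (R (cl x)) (hR _).symm ⊗ₘ J y (R (cl y)) (hR _).symm)
  have θ_eq : ∀ {x y : C} {a b : A} (h : cl x = a) (h' : cl y = b),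
      θ x y = χ (J x (R a) (h.trans (hR a).symm) ⊗ₘ J y (R b) (h'.trans (hR b).symm)) := by
    rintro x y _ _ rfl rfl
    rfl
  have χ_JJ : ∀ {x x' y y' : C} (h : cl x = cl x') (h' : cl y = cl y'),
      χ (J x x' h ⊗ₘ J y y' h') = θ x y - θ x' y' := by
    intro x x' y y' h h'
    rw [θ_eq h h', eq_sub_iff_add_eq, ← χ_comp, tensorHom_comp_tensorHom,
      J_comp h (hR _).symm, J_comp h' (hR _).symm]
  refine ⟨{ cl := cl, cl_surj := cl_surj, cl_tensor := cl_tensor, cl_hom := cl_hom, χ := χ,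
            χ_comp := χ_comp, θ := θ, χ_bij := ?_, χ_tensor := ?_ }⟩
  · intro x y h
    constructor
    · intro f g hfg
      rw [← χ_spec f, ← χ_spec g, hfg]
    · intro b
      exact ⟨s b (J x y h), χ_eq _ _ rfl⟩
  · intro x y x' y' f g
    conv_lhs => rw [← χ_spec f, ← χ_spec g, s_tensor, χ_s, χ_JJ (cl_hom f) (cl_hom g)]
    abel

/-! ### The comparison functor -/

namespace PicCoord
variable {C : Type u} [Category.{v} C] [MonoidalCategory C]
  {A B : Type*} [AddCommGroup A] [AddCommGroup B] (P : PicCoord C A B)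

theorem χ_id (x : C) : P.χ (𝟙 x) = 0 := by
  have := P.χ_comp (𝟙 x) (𝟙 x)
  simpa using this

theorem χ_whiskerLeft (x : C) {y z : C} (f : y ⟶ z) :
    P.χ (x ◁ f) = P.χ f + P.θ x y - P.θ x z := by
  rw [← id_tensorHom, P.χ_tensor, P.χ_id, zero_add]

theorem χ_whiskerRight {y z : C} (f : y ⟶ z) (x : C) :
    P.χ (f ▷ x) = P.χ f + P.θ y x - P.θ z x := by
  rw [← tensorHom_id, P.χ_tensor, P.χ_id, add_zero]

theorem cl_unit : P.cl (𝟙_ C) = 0 := by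
  have h := P.cl_hom (λ_ (𝟙_ C)).hom
  rw [P.cl_tensor] at h
  simpa using h

/-- The associator in coordinates, corrected by `θ` so that it depends only on classes. -/
def assocVal (x y z : C) : B :=
  P.χ (α_ x y z).hom + P.θ y z + P.θ x (y ⊗ z) - P.θ x y - P.θ (x ⊗ y) z

theorem assocVal_congr {x y z x' y' z' : C} (hx : P.cl x = P.cl x') (hy : P.cl y = P.cl y')
    (hz : P.cl z = P.cl z') : P.assocVal x y z = P.assocVal x' y' z' := by
  obtain ⟨f, -⟩ := (P.χ_bij hx).2 0
  obtain ⟨g, -⟩ := (P.χ_bij hy).2 0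
  obtain ⟨k, -⟩ := (P.χ_bij hz).2 0
  have h := congrArg P.χ (associator_naturality f g k)
  simp only [P.χ_comp, P.χ_tensor] at h
  unfold assocVal
  grind

theorem pentagon_assocVal (x y z w : C) :
    P.assocVal x y z + P.assocVal x (y ⊗ z) w + P.assocVal y z w =
      P.assocVal (x ⊗ y) z w + P.assocVal x y (z ⊗ w) := by
  have h := congrArg P.χ (pentagon x y z w)
  simp only [P.χ_comp, P.χ_whiskerLeft, P.χ_whiskerRight] at h
  unfold assocVal
  grind

/-- An object with prescribed class. -/
noncomputable def rep (a : A) : C := (P.cl_surj a).choose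

theorem cl_rep (a : A) : P.cl (P.rep a) = a := (P.cl_surj a).choose_spec

theorem cl_rep_add (a b : A) : P.cl (P.rep (a + b)) = P.cl (P.rep a ⊗ P.rep b) := by
  rw [P.cl_tensor, P.cl_rep, P.cl_rep, P.cl_rep]

/-- The functor to the standard model that records classes and coordinates. -/
def toModel : C ⥤ PicModel A B where
  obj x := ⟨P.cl x⟩
  map f := ⟨P.χ f, P.cl_hom f⟩
  map_id x := PicModel.hom_ext _ _ (P.χ_id x)
  map_comp f g := PicModel.hom_ext _ _ (P.χ_comp f g)

@[simp] theorem toModel_obj_cls (x : C) : (P.toModel.obj x).cls = P.cl x := rfl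
@[simp] theorem toModel_map_val {x y : C} (f : x ⟶ y) : (P.toModel.map f).val = P.χ f := rfl

instance : P.toModel.IsEquivalence where
  faithful := ⟨fun {_ _} f _ h =>
    (P.χ_bij (P.cl_hom f)).1 (congrArg PicModel.Hom.val h)⟩
  full := ⟨fun {_ _} f => by
    obtain ⟨g, hg⟩ := (P.χ_bij f.eq).2 f.val
    exact ⟨g, PicModel.hom_ext _ _ hg⟩⟩
  essSurj := ⟨fun a => by
    obtain ⟨x, hx⟩ := P.cl_surj a.cls
    exact ⟨x, ⟨PicModel.mkIso 0 hx⟩⟩⟩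

/-- If the associator is the coboundary of `m`, the left unitor in coordinates, corrected by `θ` and
`m`, is the same element of `B` for every object; its negative is the unit constraint of the
functor to the model. It is read off from the formula for the left unitor of `𝟙_ C ⊗ x`. -/
theorem leftUnitor_const (m : A → A → B)
    (hm : ∀ x y z, P.assocVal x y z = PicCocycle.cob m (P.cl x) (P.cl y) (P.cl z)) (x : C) :
    P.χ (λ_ x).hom - P.θ (𝟙_ C) x - m 0 (P.cl x) =
      P.χ (λ_ (𝟙_ C)).hom - P.θ (𝟙_ C) (𝟙_ C) - m 0 0 := by
  have h := congrArg P.χ (leftUnitor_tensor_hom (𝟙_ C) x)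
  have e := P.χ_comp (α_ (𝟙_ C) (𝟙_ C) x).hom (α_ (𝟙_ C) (𝟙_ C) x).inv
  have n := congrArg P.χ (leftUnitor_naturality (λ_ x).hom)
  have k := hm (𝟙_ C) (𝟙_ C) x
  simp only [P.χ_comp, P.χ_whiskerRight, P.χ_whiskerLeft, Iso.hom_inv_id, P.χ_id] at h e n
  simp only [assocVal, PicCocycle.cob, P.cl_unit, zero_add] at k
  grind

variable [SymmetricCategory C]

/-- The braiding in coordinates, corrected by `θ` so that it depends only on classes. -/
def braidVal (x y : C) : B :=
  P.χ (β_ x y).hom - P.θ x y + P.θ y x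

theorem braidVal_congr {x y x' y' : C} (hx : P.cl x = P.cl x') (hy : P.cl y = P.cl y') :
    P.braidVal x y = P.braidVal x' y' := by
  obtain ⟨f, -⟩ := (P.χ_bij hx).2 0
  obtain ⟨g, -⟩ := (P.χ_bij hy).2 0
  have h := congrArg P.χ (BraidedCategory.braiding_naturality f g)
  simp only [P.χ_comp, P.χ_tensor] at h
  unfold braidVal
  grind

theorem hexagon_braidVal (x y z : C) :
    P.assocVal x y z + P.braidVal x (y ⊗ z) + P.assocVal y z x =
      P.braidVal x y + P.assocVal y x z + P.braidVal x z := by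
  have h := congrArg P.χ (BraidedCategory.hexagon_forward x y z)
  simp only [P.χ_comp, P.χ_whiskerLeft, P.χ_whiskerRight] at h
  unfold assocVal braidVal
  grind

theorem braidVal_symm (x y : C) : P.braidVal x y = - P.braidVal y x := by
  have h := congrArg P.χ (SymmetricCategory.symmetry x y)
  simp only [P.χ_comp, P.χ_id] at h
  unfold braidVal
  grind

/-- The cocycle of a restrained Pic-category. -/
noncomputable def cocycle (hres : ∀ g : C, (β_ g g).hom = 𝟙 (g ⊗ g)) : PicCocycle A B where
  h a b c := P.assocVal (P.rep a) (P.rep b) (P.rep c)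
  c a b := P.braidVal (P.rep a) (P.rep b)
  pent a b c d := by
    have h₁ := P.assocVal_congr (x := P.rep a) (z := P.rep d) rfl (P.cl_rep_add b c) rfl
    have h₂ := P.assocVal_congr (y := P.rep c) (z := P.rep d) (P.cl_rep_add a b) rfl rfl
    have h₃ := P.assocVal_congr (x := P.rep a) (y := P.rep b) rfl rfl (P.cl_rep_add c d)
    rw [h₁, h₂, h₃, P.pentagon_assocVal]
  hex a b c := by
    rw [P.braidVal_congr (x := P.rep a) rfl (P.cl_rep_add b c), P.hexagon_braidVal]
  symm a b := P.braidVal_symm _ _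
  alt a := by simp [braidVal, hres, P.χ_id]

theorem cocycle_h (hres : ∀ g : C, (β_ g g).hom = 𝟙 (g ⊗ g)) (x y z : C) :
    (P.cocycle hres).h (P.cl x) (P.cl y) (P.cl z) = P.assocVal x y z :=
  P.assocVal_congr (P.cl_rep _) (P.cl_rep _) (P.cl_rep _)

theorem cocycle_c (hres : ∀ g : C, (β_ g g).hom = 𝟙 (g ⊗ g)) (x y : C) :
    (P.cocycle hres).c (P.cl x) (P.cl y) = P.braidVal x y :=
  P.braidVal_congr (P.cl_rep _) (P.cl_rep _)

/-- A trivialization `m` of the cocycle makes `toModel` braided monoidal, with tensorator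
`-θ - m`. -/
theorem nonempty_braided_toModel (m : A → A → B)
    (hm : ∀ x y z, P.assocVal x y z = PicCocycle.cob m (P.cl x) (P.cl y) (P.cl z))
    (hc : ∀ x y, P.braidVal x y = m (P.cl x) (P.cl y) - m (P.cl y) (P.cl x)) :
    Nonempty P.toModel.Braided :=
  let core : P.toModel.CoreMonoidal :=
    { εIso := PicModel.mkIso (m 0 0 + P.θ (𝟙_ C) (𝟙_ C) - P.χ (λ_ (𝟙_ C)).hom) P.cl_unit.symm
      μIso := fun x y => PicModel.mkIso (- P.θ x y - m (P.cl x) (P.cl y)) (P.cl_tensor x y).symm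
      μIso_hom_natural_left := fun {x y} f z => by
        ext
        have := P.cl_hom f
        change P.χ f + (-P.θ y z - m (P.cl y) (P.cl z)) =
          (-P.θ x z - m (P.cl x) (P.cl z)) + P.χ (f ▷ z)
        rw [P.χ_whiskerRight, this]
        abel
      μIso_hom_natural_right := fun {x y} z f => by
        ext
        have := P.cl_hom f
        change P.χ f + (-P.θ z y - m (P.cl z) (P.cl y)) =
          (-P.θ z x - m (P.cl z) (P.cl x)) + P.χ (z ◁ f)
        rw [P.χ_whiskerLeft, this]
        abel
      associativity := fun x y z => by
        ext
        have := hm x y z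
        simp only [assocVal, PicCocycle.cob] at this
        change (-P.θ x y - m (P.cl x) (P.cl y)) +
          ((-P.θ (x ⊗ y) z - m (P.cl (x ⊗ y)) (P.cl z)) + P.χ (α_ x y z).hom) =
          0 + ((-P.θ y z - m (P.cl y) (P.cl z)) +
            (-P.θ x (y ⊗ z) - m (P.cl x) (P.cl (y ⊗ z))))
        rw [P.cl_tensor, P.cl_tensor]
        grind
      left_unitality := fun x => by
        ext
        have := P.leftUnitor_const m hm x
        change 0 = (m 0 0 + P.θ (𝟙_ C) (𝟙_ C) - P.χ (λ_ (𝟙_ C)).hom) +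
          ((-P.θ (𝟙_ C) x - m (P.cl (𝟙_ C)) (P.cl x)) + P.χ (λ_ x).hom)
        rw [P.cl_unit]
        grind
      right_unitality := fun x => by
        ext
        have h := P.leftUnitor_const m hm x
        have h1 := congrArg P.χ (braiding_leftUnitor x)
        have h2 := hc x (𝟙_ C)
        simp only [P.χ_comp, braidVal, P.cl_unit] at h1 h2
        change 0 = (m 0 0 + P.θ (𝟙_ C) (𝟙_ C) - P.χ (λ_ (𝟙_ C)).hom) +
          ((-P.θ x (𝟙_ C) - m (P.cl x) (P.cl (𝟙_ C))) + P.χ (ρ_ x).hom)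
        rw [P.cl_unit]
        grind }
  ⟨{ core.toMonoidal with
    braided := fun x y => by
      ext
      have := hc x y
      simp only [braidVal] at this
      change (-P.θ x y - m (P.cl x) (P.cl y)) + P.χ (β_ x y).hom =
        0 + (-P.θ y x - m (P.cl y) (P.cl x))
      grind }⟩

end PicCoord

/-- A restrained Pic-category is equivalent, by a braided functor, to the standard model of its two
groups, where the groups are only required to be given up to the isomorphisms `cl` and `ι`. -/
theorem exists_equivalence_picModel {C : Type u} [Category.{v} C] [MonoidalCategory C]
    [SymmetricCategory C] (hC : IsGrCategory C) (hres : ∀ g : C, (β_ g g).hom = 𝟙 (g ⊗ g))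
    {A B : Type*} [AddCommGroup A] [AddCommGroup B] (cl : C → A)
    (cl_surj : Function.Surjective cl)
    (cl_tensor : ∀ x y, cl (x ⊗ y) = cl x + cl y)
    (cl_eq : ∀ x y, cl x = cl y ↔ Nonempty (x ≅ y))
    (ι : Aut (𝟙_ C) ≃ B) (hι : ∀ s t, ι (s * t) = ι s + ι t) :
    ∃ F : C ⥤ PicModel A B, Nonempty F.Braided ∧ F.IsEquivalence := by
  obtain ⟨P⟩ := exists_picCoord hC cl cl_surj cl_tensor cl_eq ι hι
  obtain ⟨m, hm, hc⟩ := (P.cocycle hres).exists_trivialization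
  refine ⟨P.toModel, P.nonempty_braided_toModel m (fun x y z => ?_) (fun x y => ?_), inferInstance⟩
  · rw [← P.cocycle_h hres, hm]
  · rw [← P.cocycle_c hres, hc]

/-! ### Isomorphism classes and the classification -/

section IsoClasses
variable {C : Type u} [Category.{v} C] [MonoidalCategory C]

theorem aut_unit_mul_comm (s t : Aut (𝟙_ C)) : s * t = t * s := by
  have h := whisker_exchange s.hom t.hom
  simp only [id_whiskerLeft, whiskerRight_id, unitors_equal, unitors_inv_equal, Category.assoc,
    Iso.inv_hom_id_assoc, cancel_epi] at h
  simp only [← Category.assoc, cancel_mono] at h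
  exact Iso.ext h

/-- The automorphism group of the unit as a commutative group, by the Eckmann-Hilton argument. -/
abbrev autUnitCommGroup : CommGroup (Aut (𝟙_ C)) :=
  { (inferInstance : Group (Aut (𝟙_ C))) with mul_comm := aut_unit_mul_comm }

/-- The group of isomorphism classes of a Pic-category. Its addition is `tensorIsoClass` by
definition. -/
noncomputable abbrev isoClassAddCommGroup [SymmetricCategory C] (hC : IsGrCategory C) :
    AddCommGroup (Quotient (isIsomorphicSetoid C)) :=
  letI : Add (Quotient (isIsomorphicSetoid C)) := ⟨tensorIsoClass⟩
  letI : Zero (Quotient (isIsomorphicSetoid C)) := ⟨Quotient.mk _ (𝟙_ C)⟩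
  have hneg : ∀ a : Quotient (isIsomorphicSetoid C), ∃ b, b + a = 0 := by
    rintro ⟨x⟩
    obtain ⟨y, -, ⟨e⟩⟩ := hC.2 x
    exact ⟨Quotient.mk _ y, Quotient.sound ⟨e⟩⟩
  letI : Neg (Quotient (isIsomorphicSetoid C)) := ⟨fun a => (hneg a).choose⟩
  { AddGroup.ofLeftAxioms
      (by rintro ⟨x⟩ ⟨y⟩ ⟨z⟩; exact Quotient.sound ⟨α_ x y z⟩)
      (by rintro ⟨x⟩; exact Quotient.sound ⟨λ_ x⟩)
      (fun a => (hneg a).choose_spec) with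
    add_comm := by rintro ⟨x⟩ ⟨y⟩; exact Quotient.sound ⟨β_ x y⟩ }
end IsoClasses

/-- Two restrained Pic-categories are equivalent as symmetric monoidal categories if and
only if their abelian groups of isomorphism classes of objects are isomorphic and their
abelian groups of automorphisms of the unit objects are isomorphic. -/
theorem restrained_pic_categories_equivalent_iff
    {C : Type u} [Category.{v} C] [MonoidalCategory C] [SymmetricCategory C]
    {D : Type u'} [Category.{v'} D] [MonoidalCategory D] [SymmetricCategory D]
    (hgrC : IsGrCategory C) (hgrD : IsGrCategory D)
    (hresC : ∀ g : C, (β_ g g).hom = 𝟙 (g ⊗ g))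
    (hresD : ∀ g : D, (β_ g g).hom = 𝟙 (g ⊗ g)) :
    Nonempty (SymmetricMonoidalEquiv C D) ↔
      ((∃ φ : Quotient (CategoryTheory.isIsomorphicSetoid C) ≃
              Quotient (CategoryTheory.isIsomorphicSetoid D),
          ∀ a b, φ (tensorIsoClass a b) = tensorIsoClass (φ a) (φ b)) ∧
        Nonempty (Aut (𝟙_ C) ≃* Aut (𝟙_ D))) := by
  constructor
  · rintro ⟨s⟩
    let i := s.monF
    let e : C ≌ D := CategoryTheory.Equivalence.mk s.F s.G s.unitIso.symm s.counitIso
    refine ⟨⟨⟨Quotient.map s.F.obj fun _ _ h => ⟨s.F.mapIso h.some⟩,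
        Quotient.map s.G.obj fun _ _ h => ⟨s.G.mapIso h.some⟩, ?_, ?_⟩, ?_⟩, ⟨?_⟩⟩
    · rintro ⟨x⟩
      exact Quotient.sound ⟨s.unitIso.app x⟩
    · rintro ⟨x⟩
      exact Quotient.sound ⟨s.counitIso.app x⟩
    · rintro ⟨x⟩ ⟨y⟩
      exact Quotient.sound ⟨(Functor.Monoidal.μIso s.F x y).symm⟩
    · exact (e.fullyFaithfulFunctor.autMulEquivOfFullyFaithful (𝟙_ C)).trans
        (Functor.Monoidal.εIso s.F).symm.conjAut
  · rintro ⟨⟨φ, hφ⟩, ⟨ψ⟩⟩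
    let _ : AddCommGroup (Quotient (isIsomorphicSetoid C)) := isoClassAddCommGroup hgrC
    let _ : CommGroup (Aut (𝟙_ C)) := autUnitCommGroup
    obtain ⟨F, ⟨_⟩, _⟩ := exists_equivalence_picModel (B := Additive (Aut (𝟙_ C))) hgrC hresC
      (fun x => (Quotient.mk _ x : Quotient (isIsomorphicSetoid C))) Quotient.mk_surjective
      (fun _ _ => rfl) (fun _ _ => Quotient.eq) Additive.ofMul (fun _ _ => rfl)
    obtain ⟨G, ⟨_⟩, _⟩ := exists_equivalence_picModel (B := Additive (Aut (𝟙_ C))) hgrD hresD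
      (fun x => φ.symm (Quotient.mk _ x : Quotient (isIsomorphicSetoid D)))
      (φ.symm.surjective.comp Quotient.mk_surjective)
      (fun x y => by
        rw [Equiv.symm_apply_eq]
        refine Eq.trans ?_ (hφ _ _).symm
        rw [Equiv.apply_symm_apply, Equiv.apply_symm_apply]
        rfl)
      (fun _ _ => φ.symm.injective.eq_iff.trans Quotient.eq)
      (ψ.symm.toEquiv.trans Additive.ofMul) (fun s t => map_mul ψ.symm s t)
    exact nonempty_symmetricMonoidalEquiv_of_cospan F G
end

section
/- Every Gr-category 𝒢 is equivalent, as a monoidal category, to a Gr-category 𝒢' in which I ⊗ g = g = g ⊗ I holds as an equality of objects for every object g and the left and right unitors are identity natural transformations. -/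
/-!
The strictly unital model is obtained from `C` by adjoining a new unit object. Its objects are
those of `Option C`; `none` evaluates to `𝟙_ C`, `some a` evaluates to `a`, and morphisms are
morphisms of `C` between the evaluations. The tensor product has `none` as a strict unit and is
that of `C` on the `some a`. Evaluation is fully faithful and surjective on objects, and it commutes
with tensor products up to isomorphisms `tensorComparison` built from the unitors of `C`. Pulling
the structure back along it gives a monoidal structure for which evaluation is a monoidal
equivalence. The unitors pulled back this way are composites of a unitor of `C` with the inverse
of a comparison isomorphism, which is the same unitor (on the unit object, because `λ_ (𝟙_ C)` and
`ρ_ (𝟙_ C)` agree), so they are identities. Being a Gr-category transfers along evaluation.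
-/

open CategoryTheory MonoidalCategory

universe v u v' u'

/-- A Gr-category monoidally equivalent to `C` in which `I ⊗ g = g = g ⊗ I` holds as an
equality of objects and both unitors are identity natural transformations. -/
structure StrictlyUnitalGrModel (C : Type u) [Category.{v} C] [MonoidalCategory C] where
  D : Type u
  [cat : Category.{v} D]
  [mon : MonoidalCategory D]
  gr : IsGrCategory D
  unit_tensor_obj_eq : ∀ X : D, 𝟙_ D ⊗ X = X
  leftUnitor_eq_id : ∀ X : D, (λ_ X).hom = eqToHom (unit_tensor_obj_eq X)
  tensor_unit_obj_eq : ∀ X : D, X ⊗ 𝟙_ D = X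
  rightUnitor_eq_id : ∀ X : D, (ρ_ X).hom = eqToHom (tensor_unit_obj_eq X)
  equiv : MonoidalEquiv C D

namespace StrictUnit

variable {C : Type u} [Category.{v} C] [MonoidalCategory C]

/-- The object of `C` underlying an object of the model: the adjoined unit `none` evaluates to
`𝟙_ C`. -/
def eval : Option C → C
  | none => 𝟙_ C
  | some a => a

/-- The tensor product of objects of the model, with `none` as a strict two-sided unit. -/
def tensor : Option C → Option C → Option C
  | none, Y => Y
  | some a, none => some a
  | some a, some b => some (a ⊗ b)

/-- The comparison between the tensor product of the evaluations and the evaluation of the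
tensor product. -/
def tensorComparison : ∀ X Y : Option C, eval X ⊗ eval Y ≅ eval (tensor X Y)
  | none, Y => λ_ (eval Y)
  | some a, none => ρ_ a
  | some _, some _ => Iso.refl _

variable (C) in
/-- The category underlying the strictly unital model: objects are those of `C` together with an
adjoined unit, and morphisms are morphisms of `C` between evaluations. -/
abbrev Model : Type u := InducedCategory C (eval (C := C))

variable (C) in
/-- The evaluation functor from the model to `C`. -/
abbrev evalFunctor : Model C ⥤ C := inducedFunctor eval

/-- The tensor operations of the model, obtained from those of `C` by conjugating with the
comparison isomorphisms. -/
instance : MonoidalCategoryStruct (Model C) where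
  tensorObj X Y := tensor X Y
  tensorUnit := (none : Option C)
  whiskerLeft X Y₁ Y₂ f := InducedCategory.homMk
    ((tensorComparison X Y₁).inv ≫ eval X ◁ f.hom ≫ (tensorComparison X Y₂).hom)
  whiskerRight {X₁ X₂} f Y := InducedCategory.homMk
    ((tensorComparison X₁ Y).inv ≫ f.hom ▷ eval Y ≫ (tensorComparison X₂ Y).hom)
  tensorHom {X₁ Y₁ X₂ Y₂} f g := InducedCategory.homMk
    ((tensorComparison X₁ X₂).inv ≫ (f.hom ⊗ₘ g.hom) ≫ (tensorComparison Y₁ Y₂).hom)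
  associator X Y Z := InducedCategory.isoMk
    (((tensorComparison (tensor X Y) Z).symm ≪≫ ((tensorComparison X Y).symm ⊗ᵢ .refl _)) ≪≫
      α_ (eval X) (eval Y) (eval Z) ≪≫
      ((.refl _ ⊗ᵢ tensorComparison Y Z) ≪≫ tensorComparison X (tensor Y Z)))
  leftUnitor X := InducedCategory.isoMk
    (((tensorComparison none X).symm ≪≫ (.refl _ ⊗ᵢ .refl _)) ≪≫ λ_ (eval X))
  rightUnitor X := InducedCategory.isoMk
    (((tensorComparison X none).symm ≪≫ (.refl _ ⊗ᵢ .refl _)) ≪≫ ρ_ (eval X))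

variable (C) in
/-- The evaluation functor preserves the tensor operations up to the comparison isomorphisms. -/
def inducingData : Monoidal.InducingFunctorData (evalFunctor C) where
  μIso X Y := tensorComparison X Y
  εIso := Iso.refl _
  whiskerLeft_eq _ _ _ _ := rfl
  whiskerRight_eq _ _ := rfl
  tensorHom_eq _ _ := rfl
  associator_eq _ _ _ := rfl
  leftUnitor_eq _ := rfl
  rightUnitor_eq _ := rfl

instance : MonoidalCategory (Model C) := Monoidal.induced (evalFunctor C) (inducingData C)

instance : (evalFunctor C).Monoidal :=
  Monoidal.fromInducedMonoidal (evalFunctor C) (inducingData C)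

instance : (evalFunctor C).EssSurj where
  mem_essImage a := ⟨(some a : Option C), ⟨Iso.refl a⟩⟩

instance : (evalFunctor C).IsEquivalence where

lemma unit_tensor (X : Model C) : 𝟙_ (Model C) ⊗ X = X := rfl

lemma tensor_unit (X : Model C) : X ⊗ 𝟙_ (Model C) = X := by
  cases X <;> rfl

lemma leftUnitor_eq (X : Model C) : (λ_ X).hom = eqToHom (unit_tensor X) := by
  apply InducedCategory.hom_ext
  change ((λ_ (eval X)).inv ≫ (𝟙 _ ⊗ₘ 𝟙 _)) ≫ (λ_ (eval X)).hom = 𝟙 _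
  simp

lemma rightUnitor_eq (X : Model C) : (ρ_ X).hom = eqToHom (tensor_unit X) := by
  apply InducedCategory.hom_ext
  cases X with
  | none =>
    change ((λ_ (𝟙_ C)).inv ≫ (𝟙 _ ⊗ₘ 𝟙 _)) ≫ (ρ_ (𝟙_ C)).hom = 𝟙 _
    rw [← unitors_equal, id_tensorHom_id, Category.comp_id, Iso.inv_hom_id]
  | some a =>
    change ((ρ_ a).inv ≫ (𝟙 _ ⊗ₘ 𝟙 _)) ≫ (ρ_ a).hom = 𝟙 _
    simp

lemma isGrCategory (hC : IsGrCategory C) : IsGrCategory (Model C) := by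
  refine ⟨fun f => ?_, fun X => ?_⟩
  · have : IsIso ((evalFunctor C).map f) := hC.1 _
    exact isIso_of_reflects_iso f (evalFunctor C)
  · obtain ⟨b, ⟨i⟩, ⟨j⟩⟩ := hC.2 (eval X)
    let Y : Model C := (some b : Option C)
    exact ⟨Y, ⟨InducedCategory.isoMk ((tensorComparison X Y).symm ≪≫ i)⟩,
      ⟨InducedCategory.isoMk ((tensorComparison Y X).symm ≪≫ j)⟩⟩

/-- A monoidal functor that is an equivalence of categories yields a monoidal equivalence, in the
direction of its inverse. -/
noncomputable def monoidalEquivOfEquivalence {D : Type u'} [Category.{v'} D] [MonoidalCategory D]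
    (e : D ≌ C) [e.functor.Monoidal] : MonoidalEquiv C D :=
  letI : e.inverse.Monoidal := e.inverseMonoidal
  haveI : e.IsMonoidal :=
    letI := e.toAdjunction.rightAdjointLaxMonoidal
    inferInstanceAs e.toAdjunction.IsMonoidal
  haveI : NatTrans.IsMonoidal e.unitIso.hom := inferInstanceAs (NatTrans.IsMonoidal e.unit)
  haveI : NatTrans.IsMonoidal e.counitIso.hom := inferInstanceAs (NatTrans.IsMonoidal e.counit)
  { F := e.inverse
    G := e.functor
    unitIso := e.counitIso
    counitIso := e.unitIso.symm
    counit_isMonoidal := inferInstanceAs (NatTrans.IsMonoidal e.unitIso.inv) }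

end StrictUnit

/-- Every Gr-category is equivalent, as a monoidal category, to a Gr-category with strict
unit laws and identity unitors. -/
theorem every_gr_category_is_equivalent_to_a_strictly_unital_gr_category
    (C : Type u) [Category.{v} C] [MonoidalCategory C] (hC : IsGrCategory C) :
    Nonempty (StrictlyUnitalGrModel C) := by
  let e : StrictUnit.Model C ≌ C := (StrictUnit.evalFunctor C).asEquivalence
  let : e.functor.Monoidal := (inferInstance : (StrictUnit.evalFunctor C).Monoidal)
  exact ⟨{
    D := StrictUnit.Model C
    gr := StrictUnit.isGrCategory hC
    unit_tensor_obj_eq := StrictUnit.unit_tensor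
    leftUnitor_eq_id := StrictUnit.leftUnitor_eq
    tensor_unit_obj_eq := StrictUnit.tensor_unit
    rightUnitor_eq_id := StrictUnit.rightUnitor_eq
    equiv := StrictUnit.monoidalEquivOfEquivalence e }⟩
end
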